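/- arXiv:2504.13430 — 4 statements merged into one kernel-verified Lean document; each statement's English description precedes it below -/
import Mathlib

section
/- (Hardness for the Nashian and positive regimes.) There exist a constant c > 0 and n₀ ∈ ℕ such that for every n ≥ n₀ and every deterministic online algorithm A for n agents: (i) for every real p with log(log n)/log n ≤ p ≤ 1 there exists an instance v with unit monopolist utilities, in which for every item k there is some w_k ≥ 0 with v k a ∈ {0, w_k} for all agents a, such that OPT_p(v) ≥ (c/p) · ALG_{A,p}(v); (ii) for every real p ≤ 1 with p < log(log n)/log n and p ≠ 0, there exists such an instance with OPT_p(v) ≥ c · (log n / log(log n)) · ALG_{A,p}(v). -/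
/-!
Let `L` be an integer with `1 ≤ L ≤ log n / log (log n)` and let `p ≤ 1 / L`, `p ≠ 0`. Against every
online algorithm an instance with gap of order `L` is built, and both parts of the theorem follow
with `L = ⌊1 / p⌋` and `L = ⌊log n / log (log n)⌋` respectively.

The adversary works with blocks of agents. A block of height `h` has `h * 2 ^ h` agents. It receives
one item, worth `w = 1 / L` to each of its members. The `2 ^ h` members with the smallest total
utility so far are dropped and get the label `h`; the other `(h - 1) * 2 ^ h` members form two
blocks of height `h - 1`, which are treated recursively. Offline, the item is shared by the dropped
agents alone, so an agent with label `g` gets `w / 2 ^ g`. The algorithm, not knowing who is going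
to be dropped, loses a factor of order `g` on the average over label `g` (`TreeGame`, `treeGame`).
Starting from `K ≥ 8 L ^ 2` blocks of height `L`, the algorithm's total over each label is so large
that one filler item per label, which brings the monopolist utility up to `1`, at most doubles the
bound (`Reach.fill`). The fewer than `L * 2 ^ L` agents outside the blocks receive one private item
each (`Reach.own`).

Every label `g ∈ [1, L]` is thus carried by the same number `K * 2 ^ L` of agents, and on it the
offline utility is at least `g / 4` times the algorithm's average. What remains is to average these
gaps over `g` in the `p`-mean (`numeric_pos`, `numeric_neg`). By `1 + p log x ≤ x ^ p` this reduces
to weighted sums of `log (L / g)`, and `∑ g, log (L / g) ≤ L`. For `0 < p ≤ 1 / L` the weights agree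
up to a factor `4`; for `p < 0` they are oppositely ordered to `log (L / g)`, so that Chebyshev's sum
inequality applies.
-/

open Real

/-- The `p`-mean welfare of a utility profile, taken to be `0` when `p < 0`
and some utility is zero. -/
noncomputable def pMeanWelfare (n : ℕ) (p : ℝ) (u : Fin n → ℝ) : ℝ :=
  if p < 0 ∧ ∃ a, u a = 0 then 0
  else ((1 / (n : ℝ)) * ∑ a, u a ^ p) ^ (1 / p)

/-- The optimal `p`-mean welfare over all feasible (fractional) allocations. -/
noncomputable def OPTwelfare (n m : ℕ) (p : ℝ) (v : Fin m → Fin n → ℝ) : ℝ :=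
  sSup { w : ℝ | ∃ y : Fin m → Fin n → ℝ,
    (∀ k a, 0 ≤ y k a) ∧ (∀ k, ∑ a, y k a ≤ 1) ∧
    w = pMeanWelfare n p (fun a => ∑ k, v k a * y k a) }

/-- The utilities produced by a deterministic online algorithm `A` on instance `v`:
item `k` is allocated according to `A k` applied to the value history of items `0,…,k`. -/
noncomputable def onlineUtilities (n m : ℕ)
    (A : (k : ℕ) → (Fin (k + 1) → Fin n → ℝ) → (Fin n → ℝ))
    (v : Fin m → Fin n → ℝ) : Fin n → ℝ :=
  fun a => ∑ k : Fin m, v k a *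
    A k.1 (fun i : Fin (k.1 + 1) => v (Fin.castLE k.isLt i)) a

/-- The `p`-mean welfare achieved by the online algorithm `A` on instance `v`. -/
noncomputable def ALGwelfare (n m : ℕ) (p : ℝ)
    (A : (k : ℕ) → (Fin (k + 1) → Fin n → ℝ) → (Fin n → ℝ))
    (v : Fin m → Fin n → ℝ) : ℝ :=
  pMeanWelfare n p (onlineUtilities n m A v)

/-! ### Game states -/

/-- The adversary can bring about a situation in which agent `a` has total value `V a` for the items
seen so far, offline utility `O a` under a feasible allocation `y` of these items, and utility `U a`
under the online algorithm `A`. All items have at most one nonzero value `w`, as in the theorem. -/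
def Reach {n : ℕ} (A : (k : ℕ) → (Fin (k + 1) → Fin n → ℝ) → (Fin n → ℝ))
    (V O U : Fin n → ℝ) : Prop :=
  ∃ (m : ℕ) (v y : Fin m → Fin n → ℝ),
    (∀ k a, 0 ≤ v k a) ∧ (∀ k, ∃ w : ℝ, 0 ≤ w ∧ ∀ a, v k a = 0 ∨ v k a = w) ∧
    (∀ k a, 0 ≤ y k a) ∧ (∀ k, ∑ a, y k a ≤ 1) ∧
    (∀ a, ∑ k, v k a = V a) ∧ (∀ a, ∑ k, v k a * y k a = O a) ∧
    (∀ a, onlineUtilities n m A v a = U a)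

theorem reach_zero {n : ℕ} (A : (k : ℕ) → (Fin (k + 1) → Fin n → ℝ) → (Fin n → ℝ)) :
    Reach A 0 0 0 :=
  ⟨0, Fin.elim0, Fin.elim0, fun k => k.elim0, fun k => k.elim0, fun k => k.elim0,
    fun k => k.elim0, by simp, by simp, by simp [onlineUtilities]⟩

/-- The next item is worth `w` to the members of `B` and `0` to the others. The offline share `y` of
it may be chosen after the algorithm's share `α` is known. -/
theorem Reach.step {n : ℕ} {A : (k : ℕ) → (Fin (k + 1) → Fin n → ℝ) → (Fin n → ℝ)}
    (hA : ∀ k h, (∀ a, 0 ≤ A k h a) ∧ ∑ a, A k h a ≤ 1)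
    {V O U : Fin n → ℝ} (h : Reach A V O U) (B : Finset (Fin n)) {w : ℝ} (hw : 0 ≤ w) :
    ∃ α : Fin n → ℝ, (∀ a, 0 ≤ α a) ∧ ∑ a, α a ≤ 1 ∧
      ∀ y : Fin n → ℝ, (∀ a, 0 ≤ y a) → ∑ a, y a ≤ 1 →
        Reach A (fun a => V a + if a ∈ B then w else 0)
          (fun a => O a + (if a ∈ B then w else 0) * y a)
          (fun a => U a + (if a ∈ B then w else 0) * α a) := by
  obtain ⟨m, v, y₀, hv, hb, hy, hy1, hV, hO, hU⟩ := h
  set x : Fin n → ℝ := fun a => if a ∈ B then w else 0 with hx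
  set v' : Fin (m + 1) → Fin n → ℝ := Fin.snoc v x with hv'
  have hvc : ∀ i : Fin m, v' i.castSucc = v i := fun i => by simp [hv']
  have hvl : v' (Fin.last m) = x := by simp [hv']
  refine ⟨A m (fun i => v' i), (hA _ _).1, (hA _ _).2, fun y hy0 hys => ?_⟩
  refine ⟨m + 1, v', Fin.snoc y₀ y, ?_, ?_, ?_, ?_, ?_, ?_, ?_⟩
  · intro k a
    refine Fin.lastCases ?_ (fun i => ?_) k
    · rw [hvl]; simp only [hx]; split_ifs <;> simp [hw]
    · rw [hvc]; exact hv i a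
  · intro k
    refine Fin.lastCases ?_ (fun i => ?_) k
    · refine ⟨w, hw, fun a => ?_⟩
      rw [hvl]; simp only [hx]; split_ifs <;> simp
    · rw [hvc]; exact hb i
  · intro k a
    refine Fin.lastCases ?_ (fun i => ?_) k
    · simpa using hy0 a
    · simpa using hy i a
  · intro k
    refine Fin.lastCases ?_ (fun i => ?_) k
    · simpa using hys
    · simpa using hy1 i
  · intro a
    rw [Fin.sum_univ_castSucc, hvl]
    simp only [hvc, hV]
    rfl
  · intro a
    rw [Fin.sum_univ_castSucc, hvl]
    simp only [hvc, Fin.snoc_castSucc, Fin.snoc_last, hO]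
    rfl
  · intro a
    unfold onlineUtilities
    rw [Fin.sum_univ_castSucc, hvl]
    simp only [hvc]
    rw [← hU a]
    unfold onlineUtilities
    have hhist : ∀ k : Fin m, (fun i : Fin (k.1 + 1) => v' (Fin.castLE k.castSucc.isLt i)) =
        fun i : Fin (k.1 + 1) => v (Fin.castLE k.isLt i) := fun k =>
      funext fun i => hvc (Fin.castLE k.isLt i)
    exact congrArg₂ (· + ·)
      (Finset.sum_congr rfl fun k _ => congrArg (fun z => v k a * A k.1 z a) (hhist k)) rfl

theorem Reach.bounds {n : ℕ} {A : (k : ℕ) → (Fin (k + 1) → Fin n → ℝ) → (Fin n → ℝ)}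
    (hA : ∀ k h, (∀ a, 0 ≤ A k h a) ∧ ∑ a, A k h a ≤ 1)
    {V O U : Fin n → ℝ} (h : Reach A V O U) (a : Fin n) : 0 ≤ U a ∧ U a ≤ V a := by
  obtain ⟨m, v, y₀, hv, hb, hy, hy1, hV, hO, hU⟩ := h
  rw [← hU, ← hV]
  unfold onlineUtilities
  refine ⟨Finset.sum_nonneg fun k _ => mul_nonneg (hv k a) ((hA _ _).1 a),
    Finset.sum_le_sum fun k _ => mul_le_of_le_one_right (hv k a) ?_⟩
  exact (Finset.single_le_sum (fun b _ => (hA _ _).1 b) (Finset.mem_univ a)).trans (hA _ _).2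

/-! ### The recursive block game -/

/-- From any state, a set `B` made up of `K` blocks of height `h` can be dissolved completely. The
function `lab` records the height of the block in which an agent is dropped; an agent with label `g`
has then seen `h + 1 - g` items of value `w` and has received the offline share `w / 2 ^ g`. Each label
occurs `K * 2 ^ h` times, and the last inequality bounds the algorithm's total on label `g`. -/
def TreeGame {n : ℕ} (A : (k : ℕ) → (Fin (k + 1) → Fin n → ℝ) → (Fin n → ℝ))
    (w : ℝ) (h K : ℕ) : Prop :=
  ∀ V O U : Fin n → ℝ, Reach A V O U → ∀ B : Finset (Fin n), B.card = K * (h * 2 ^ h) →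
    ∃ (V' O' U' : Fin n → ℝ) (lab : Fin n → ℕ), Reach A V' O' U' ∧
      (∀ a ∉ B, V' a = V a ∧ O' a = O a ∧ U' a = U a) ∧
      (∀ a ∈ B, 1 ≤ lab a ∧ lab a ≤ h ∧ V' a = V a + (h + 1 - lab a) * w ∧
        O' a = O a + w / 2 ^ lab a) ∧
      ∀ g, 1 ≤ g → g ≤ h → (B.filter (lab · = g)).card = K * 2 ^ h ∧
        g * ∑ a ∈ B with lab a = g, U' a ≤ ∑ a ∈ B, U a + K * w * (2 ^ (h + 1 - g) - 1)

theorem filter_ite_eq_union {n : ℕ} {B C : Finset (Fin n)} (hC : C ⊆ B) (l₁ l₂ : Fin n → ℕ)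
    (g : ℕ) : B.filter (fun a => (if a ∈ C then l₁ a else l₂ a) = g) =
      C.filter (l₁ · = g) ∪ (B \ C).filter (l₂ · = g) := by
  ext a
  have := @hC a
  by_cases h : a ∈ C <;> simp [h]
  exact fun _ => this h

theorem TreeGame.add {n : ℕ} {A : (k : ℕ) → (Fin (k + 1) → Fin n → ℝ) → (Fin n → ℝ)}
    {w : ℝ} {h K₁ K₂ : ℕ} (h₁ : TreeGame A w h K₁) (h₂ : TreeGame A w h K₂) :
    TreeGame A w h (K₁ + K₂) := by
  intro V O U hR B hB
  obtain ⟨C, hCB, hC⟩ := Finset.exists_subset_card_eq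
    (show K₁ * (h * 2 ^ h) ≤ B.card by rw [hB, add_mul]; omega)
  have hD : (B \ C).card = K₂ * (h * 2 ^ h) := by
    rw [Finset.card_sdiff_of_subset hCB, hB, hC, add_mul]; omega
  obtain ⟨V₁, O₁, U₁, l₁, hR₁, hout₁, hin₁, hg₁⟩ := h₁ V O U hR C hC
  obtain ⟨V₂, O₂, U₂, l₂, hR₂, hout₂, hin₂, hg₂⟩ := h₂ V₁ O₁ U₁ hR₁ (B \ C) hD
  refine ⟨V₂, O₂, U₂, fun a => if a ∈ C then l₁ a else l₂ a, hR₂, ?_, ?_, ?_⟩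
  · intro a ha
    have h1 := hout₁ a (fun h => ha (hCB h))
    have h2 := hout₂ a (fun h => ha (Finset.sdiff_subset h))
    grind
  · intro a ha
    by_cases hac : a ∈ C
    · have h1 := hin₁ a hac
      have h2 := hout₂ a (by simp [hac])
      simp only [hac, if_true]
      rw [h2.1, h2.2.1]
      exact h1
    · have h1 := hout₁ a hac
      have h2 := hin₂ a (by simp [hac, ha])
      simp only [hac, if_false]
      rw [← h1.1, ← h1.2.1]
      exact h2
  · intro g hg hgh
    obtain ⟨c₁, s₁⟩ := hg₁ g hg hgh
    obtain ⟨c₂, s₂⟩ := hg₂ g hg hgh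
    have hdis : Disjoint (C.filter (l₁ · = g)) ((B \ C).filter (l₂ · = g)) :=
      Finset.disjoint_filter_filter Finset.disjoint_sdiff
    rw [filter_ite_eq_union hCB, Finset.card_union_of_disjoint hdis, Finset.sum_union hdis, c₁, c₂]
    refine ⟨by ring, ?_⟩
    have e1 : ∑ a ∈ C with l₁ a = g, U₂ a = ∑ a ∈ C with l₁ a = g, U₁ a :=
      Finset.sum_congr rfl fun a ha => (hout₂ a (by simp at ha; simp [ha.1])).2.2
    have e2 : ∑ a ∈ B \ C, U₁ a = ∑ a ∈ B \ C, U a :=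
      Finset.sum_congr rfl fun a ha => (hout₁ a (by simp at ha; exact ha.2)).2.2
    rw [← Finset.sum_sdiff hCB, e1]
    rw [e2] at s₂
    push_cast
    linarith

theorem TreeGame.nsmul {n : ℕ} {A : (k : ℕ) → (Fin (k + 1) → Fin n → ℝ) → (Fin n → ℝ)}
    {w : ℝ} {h : ℕ} (h₁ : TreeGame A w h 1) (K : ℕ) : TreeGame A w h K := by
  induction K with
  | zero =>
    intro V O U hR B hB
    have : B = ∅ := by simpa using hB
    subst this
    exact ⟨V, O, U, fun _ => 0, hR, by simp, by simp, by simp⟩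
  | succ K ih => exact ih.add h₁

/-- Among `(h + 1) * d` agents there are `d` whose `f`-average is at most the overall average. -/
theorem exists_subset_sum_le {n : ℕ} (f : Fin n → ℝ) (d : ℕ) :
    ∀ (h : ℕ) (B : Finset (Fin n)), B.card = (h + 1) * d →
    ∃ D ⊆ B, D.card = d ∧ (h + 1) * ∑ a ∈ D, f a ≤ ∑ a ∈ B, f a := by
  intro h
  induction h with
  | zero => intro B hB; exact ⟨B, subset_rfl, by simpa using hB, by simp⟩
  | succ h ih =>
    intro B hB
    obtain ⟨C, hCB, hC⟩ := Finset.exists_subset_card_eq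
      (show (h + 1) * d ≤ B.card by rw [hB]; gcongr; omega)
    have hC' : (B \ C).card = d := by
      rw [Finset.card_sdiff_of_subset hCB, hB, hC, ← Nat.sub_mul]; simp
    obtain ⟨D, hDC, hD, hs⟩ := ih C hC
    have hsum := Finset.sum_sdiff (f := f) hCB
    push_cast
    have hh : (0 : ℝ) ≤ h := h.cast_nonneg
    rcases le_total (∑ a ∈ D, f a) (∑ a ∈ B \ C, f a) with hle | hle
    · exact ⟨D, hDC.trans hCB, hD, by linarith⟩
    · exact ⟨B \ C, Finset.sdiff_subset, hC', by nlinarith⟩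

/-- The recursive step: after one item, the `2 ^ (h + 1)` agents of a block of height `h + 1` with the
least utility are dropped, and the rest splits into two blocks of height `h`. -/
theorem TreeGame.succ {n : ℕ} {A : (k : ℕ) → (Fin (k + 1) → Fin n → ℝ) → (Fin n → ℝ)}
    (hA : ∀ k h, (∀ a, 0 ≤ A k h a) ∧ ∑ a, A k h a ≤ 1)
    {w : ℝ} (hw : 0 ≤ w) {h : ℕ} (h₂ : TreeGame A w h 2) : TreeGame A w (h + 1) 1 := by
  intro V O U hR B hB
  obtain ⟨α, hα0, hα1, hstep⟩ := hR.step hA B hw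
  set U₁ : Fin n → ℝ := fun a => U a + (if a ∈ B then w else 0) * α a with hU₁
  have hsumB : ∑ a ∈ B, U₁ a ≤ ∑ a ∈ B, U a + w := by
    simp only [hU₁, Finset.sum_add_distrib]
    gcongr
    calc ∑ a ∈ B, (if a ∈ B then w else 0) * α a = ∑ a ∈ B, w * α a :=
          Finset.sum_congr rfl fun a ha => by simp [ha]
      _ = w * ∑ a ∈ B, α a := by rw [Finset.mul_sum]
      _ ≤ w * 1 := by
          gcongr
          exact (Finset.sum_le_univ_sum_of_nonneg hα0).trans hα1
      _ = w := mul_one w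
  obtain ⟨D, hDB, hD, hDs⟩ := exists_subset_sum_le U₁ (2 ^ (h + 1)) h B (by rw [hB, one_mul])
  set y : Fin n → ℝ := fun a => if a ∈ D then 1 / 2 ^ (h + 1) else 0 with hy
  have hR₁ := hstep y (fun a => by simp only [hy]; split_ifs <;> positivity)
    (by simp [hy, Finset.sum_ite_mem, hD])
  have hE : (B \ D).card = 2 * (h * 2 ^ h) := by
    rw [Finset.card_sdiff_of_subset hDB, hB, hD, one_mul, add_mul, one_mul, Nat.add_sub_cancel]; ring
  obtain ⟨V₂, O₂, U₂, l, hR₂, hout, hin, hg⟩ := h₂ _ _ _ hR₁ (B \ D) hE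
  refine ⟨V₂, O₂, U₂, fun a => if a ∈ D then h + 1 else l a, hR₂, ?_, ?_, ?_⟩
  · intro a ha
    have h1 := hout a (by simp [ha])
    simpa [ha, hU₁] using h1
  · intro a ha
    by_cases had : a ∈ D
    · obtain ⟨e1, e2, -⟩ := hout a (by simp [had])
      simp only [had, if_true]
      refine ⟨by omega, le_rfl, ?_, ?_⟩
      · rw [e1]; simp [ha]
      · rw [e2]; simp [ha, hy, had]; rfl
    · obtain ⟨e1, e2, e3, e4⟩ := hin a (by simp [had, ha])
      simp only [had, if_false]
      refine ⟨e1, by omega, ?_, ?_⟩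
      · rw [e3]; simp [ha]; ring
      · rw [e4]; simp [hy, had]
  · intro g hg1 hgh
    have hU₁nn : ∀ a, 0 ≤ U₁ a := fun a => (hR₁.bounds hA a).1
    have hdis : Disjoint (D.filter (fun _ => h + 1 = g)) ((B \ D).filter (l · = g)) :=
      Finset.disjoint_filter_filter Finset.disjoint_sdiff
    have hun := filter_ite_eq_union hDB (fun _ => h + 1) l g
    rw [hun, Finset.card_union_of_disjoint hdis, Finset.sum_union hdis]
    rcases Nat.lt_or_ge h g with hlt | hle
    · obtain rfl : g = h + 1 := by omega
      have he : (B \ D).filter (l · = h + 1) = ∅ := by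
        apply Finset.filter_eq_empty_iff.2
        intro a ha
        have := (hin a ha).2.1
        omega
      rw [he]
      simp only [Finset.filter_true, Finset.card_empty, Finset.sum_empty, hD]
      refine ⟨by simp, ?_⟩
      have e1 : ∑ a ∈ D, U₂ a = ∑ a ∈ D, U₁ a :=
        Finset.sum_congr rfl fun a ha => (hout a (by simp [ha])).2.2
      rw [e1]
      have : h + 1 + 1 - (h + 1) = 1 := by omega
      rw [this]
      push_cast
      linarith
    · obtain ⟨c, s⟩ := hg g hg1 hle
      have he : D.filter (fun _ => h + 1 = g) = ∅ := by
        apply Finset.filter_eq_empty_iff.2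
        intro a ha
        omega
      rw [he, c]
      refine ⟨by simp; ring, ?_⟩
      have hsub : ∑ a ∈ B \ D, U₁ a ≤ ∑ a ∈ B, U₁ a :=
        Finset.sum_le_sum_of_subset_of_nonneg Finset.sdiff_subset fun a _ _ => hU₁nn a
      have : h + 1 + 1 - g = (h + 1 - g) + 1 := by omega
      rw [this, pow_succ]
      push_cast at s ⊢
      simp only [Finset.sum_empty, zero_add]
      linarith

theorem treeGame {n : ℕ} {A : (k : ℕ) → (Fin (k + 1) → Fin n → ℝ) → (Fin n → ℝ)}
    (hA : ∀ k h, (∀ a, 0 ≤ A k h a) ∧ ∑ a, A k h a ≤ 1)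
    {w : ℝ} (hw : 0 ≤ w) (h K : ℕ) : TreeGame A w h K := by
  induction h generalizing K with
  | zero =>
    intro V O U hR B hB
    have : B = ∅ := by simpa using hB
    subst this
    exact ⟨V, O, U, fun _ => 0, hR, by simp, by simp, fun g h1 h2 => by omega⟩
  | succ h ih => exact (TreeGame.succ hA hw (ih 2)).nsmul K

/-! ### Completing the monopolist utilities -/

/-- One filler item for a set `B` of agents with common value `x` so far, left unallocated by the
offline solution, raises the values on `B` to `1` and the algorithm's total on `B` by at most `1`. -/
theorem Reach.fill {n : ℕ} {A : (k : ℕ) → (Fin (k + 1) → Fin n → ℝ) → (Fin n → ℝ)}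
    (hA : ∀ k h, (∀ a, 0 ≤ A k h a) ∧ ∑ a, A k h a ≤ 1)
    {V O U : Fin n → ℝ} (hR : Reach A V O U) (B : Finset (Fin n)) {x : ℝ} (hx0 : 0 ≤ x)
    (hx1 : x ≤ 1) (hB : ∀ a ∈ B, V a = x) :
    ∃ U' : Fin n → ℝ, Reach A (fun a => if a ∈ B then 1 else V a) O U' ∧
      (∀ a ∉ B, U' a = U a) ∧ ∑ a ∈ B, U' a ≤ ∑ a ∈ B, U a + 1 := by
  obtain ⟨α, hα0, hα1, hstep⟩ := hR.step hA B (sub_nonneg.2 hx1)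
  have h := hstep (fun _ => 0) (fun _ => le_rfl) (by simp)
  refine ⟨fun a => U a + (if a ∈ B then 1 - x else 0) * α a, ?_, fun a ha => by simp [ha], ?_⟩
  · convert h using 2 with a a
    · split_ifs with ha
      · rw [hB a ha]; ring
      · ring
    · simp
  · rw [Finset.sum_add_distrib]
    gcongr
    calc ∑ a ∈ B, (if a ∈ B then 1 - x else 0) * α a ≤ ∑ a ∈ B, α a :=
          Finset.sum_le_sum fun a ha => by
            simp only [ha, if_true]
            exact mul_le_of_le_one_left (hα0 a) (by linarith)
      _ ≤ 1 := (Finset.sum_le_univ_sum_of_nonneg hα0).trans hα1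

/-- Each agent of `S` receives a private item of value `1`. -/
theorem Reach.own {n : ℕ} {A : (k : ℕ) → (Fin (k + 1) → Fin n → ℝ) → (Fin n → ℝ)}
    (hA : ∀ k h, (∀ a, 0 ≤ A k h a) ∧ ∑ a, A k h a ≤ 1)
    {V O U : Fin n → ℝ} (hR : Reach A V O U) (S : Finset (Fin n))
    (hS : ∀ a ∈ S, V a = 0 ∧ O a = 0) :
    ∃ U' : Fin n → ℝ, Reach A (fun a => if a ∈ S then 1 else V a)
      (fun a => if a ∈ S then 1 else O a) U' ∧ ∀ a ∉ S, U' a = U a := by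
  induction S using Finset.induction_on with
  | empty => exact ⟨U, by simpa using hR, fun _ _ => rfl⟩
  | insert b S hb ih =>
    obtain ⟨U₁, hR₁, hU₁⟩ := ih fun a ha => hS a (Finset.mem_insert_of_mem ha)
    obtain ⟨α, hα0, hα1, hstep⟩ := hR₁.step hA {b} zero_le_one
    have h := hstep (fun a => if a = b then 1 else 0)
      (fun a => by split_ifs <;> norm_num) (by simp)
    obtain ⟨hb1, hb2⟩ := hS b (Finset.mem_insert_self b S)
    refine ⟨fun a => U₁ a + (if a ∈ ({b} : Finset (Fin n)) then 1 else 0) * α a, ?_, ?_⟩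
    · convert h using 2 with a a
      · by_cases hab : a = b
        · subst hab; simp [hb, hb1]
        · simp [hab]
      · by_cases hab : a = b
        · subst hab; simp [hb, hb2]
        · simp [hab]
    · intro a ha
      simp only [Finset.mem_insert, not_or] at ha
      simp [ha.1, hU₁ a ha.2]

/-- The final state. Label `0` marks the agents outside the `K` blocks of height `L`. -/
theorem exists_hard_state {n : ℕ} {A : (k : ℕ) → (Fin (k + 1) → Fin n → ℝ) → (Fin n → ℝ)}
    (hA : ∀ k h, (∀ a, 0 ≤ A k h a) ∧ ∑ a, A k h a ≤ 1)
    {L K : ℕ} (hL : 1 ≤ L) (hn : K * (L * 2 ^ L) ≤ n) :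
    ∃ (O U : Fin n → ℝ) (lab : Fin n → ℕ), Reach A (fun _ => 1) O U ∧
      (∀ a, lab a ≤ L) ∧ (∀ a, lab a = 0 → O a = 1) ∧
      (∀ a, lab a ≠ 0 → O a = 1 / (L * 2 ^ lab a)) ∧
      (Finset.univ.filter (lab · = 0)).card = n - K * (L * 2 ^ L) ∧
      ∀ g ∈ Finset.Icc 1 L, (Finset.univ.filter (lab · = g)).card = K * 2 ^ L ∧
        g * ∑ a with lab a = g, U a ≤ K / L * 2 ^ (L + 1 - g) + g := by
  have hL0 : (0 : ℝ) < L := by exact_mod_cast hL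
  obtain ⟨B, -, hB⟩ := Finset.exists_subset_card_eq
    (show K * (L * 2 ^ L) ≤ (Finset.univ : Finset (Fin n)).card by simpa using hn)
  obtain ⟨V₁, O₁, U₁, l, hR₁, hout, hin, hg⟩ :=
    treeGame hA (w := 1 / L) (by positivity) L K 0 0 0 (reach_zero A) B hB
  set lab : Fin n → ℕ := fun a => if a ∈ B then l a else 0 with hlab
  have hlabB : ∀ a, lab a ≠ 0 ↔ a ∈ B := fun a => by
    by_cases ha : a ∈ B
    · have := (hin a ha).1
      simp [hlab, ha]; omega
    · simp [hlab, ha]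
  have hfilt : ∀ g, 1 ≤ g → Finset.univ.filter (lab · = g) = B.filter (l · = g) := fun g hg => by
    ext a
    by_cases ha : a ∈ B
    · simp [hlab, ha]
    · simp [hlab, ha]; omega
  -- Filler items for the labels `1, …, j`, one after the other.
  have hfill : ∀ j ≤ L, ∃ V U : Fin n → ℝ, Reach A V O₁ U ∧
      (∀ a, V a = if 1 ≤ lab a ∧ lab a ≤ j then 1 else V₁ a) ∧
      ∀ g, ∑ a with lab a = g, U a ≤
        ∑ a with lab a = g, U₁ a + if 1 ≤ g ∧ g ≤ j then 1 else 0 := by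
    intro j
    induction j with
    | zero =>
      intro _
      refine ⟨V₁, U₁, hR₁, fun a => ?_, fun g => ?_⟩
      · rw [if_neg (by omega)]
      · rw [if_neg (by omega), add_zero]
    | succ j ih =>
      intro hj
      obtain ⟨V, U, hR, hV, hU⟩ := ih (by omega)
      have hjL : ((j : ℝ) + 1) ≤ L := by exact_mod_cast hj
      obtain ⟨U', hR', hU', hs⟩ := hR.fill hA (Finset.univ.filter (lab · = j + 1))
        (x := (L + 1 - (j + 1 : ℕ)) * (1 / L))
        (by
          push_cast
          exact mul_nonneg (by linarith) (by positivity))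
        (by
          push_cast
          rw [mul_one_div, div_le_one hL0]
          linarith [Nat.cast_nonneg (α := ℝ) j])
        (fun a ha => by
          have ha' : lab a = j + 1 := by simpa using ha
          have haB : a ∈ B := (hlabB a).1 (by omega)
          have hla : l a = j + 1 := by simpa [hlab, haB] using ha'
          rw [hV, if_neg (by omega), (hin a haB).2.2.1, hla]
          simp)
      refine ⟨_, U', hR', fun a => ?_, fun g => ?_⟩
      · rw [hV]
        simp only [Finset.mem_filter, Finset.mem_univ, true_and]
        grind
      · by_cases hgj : g = j + 1
        · subst hgj
          have := hU (j + 1)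
          rw [if_neg (by omega)] at this
          rw [if_pos (by omega)]
          linarith
        · have e : ∑ a with lab a = g, U' a = ∑ a with lab a = g, U a :=
            Finset.sum_congr rfl fun a ha => hU' a (by simp at ha ⊢; omega)
          rw [e]
          refine (hU g).trans_eq ?_
          congr 1
          grind
  obtain ⟨V₂, U₂, hR₂, hV₂, hU₂⟩ := hfill L le_rfl
  obtain ⟨U₃, hR₃, hU₃⟩ := hR₂.own hA (Finset.univ.filter (lab · = 0)) (fun a ha => by
    have ha' : lab a = 0 := by simpa using ha
    have haB : a ∉ B := fun h => (hlabB a).2 h ha'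
    rw [hV₂, if_neg (by omega)]
    exact ⟨(hout a haB).1, (hout a haB).2.1⟩)
  have hle : ∀ a, lab a ≤ L := fun a => by
    by_cases ha : a ∈ B
    · simpa [hlab, ha] using (hin a ha).2.1
    · simp [hlab, ha]
  refine ⟨fun a => if lab a = 0 then 1 else O₁ a, U₃, lab, ?_, hle, ?_, ?_, ?_, ?_⟩
  · convert hR₃ using 2 with a a
    · have := hle a
      rw [hV₂]
      simp only [Finset.mem_filter, Finset.mem_univ, true_and]
      grind
    · simp
  · intro a ha
    simp [ha]
  · intro a ha
    have haB := (hlabB a).1 ha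
    have hla : lab a = l a := by simp [hlab, haB]
    simp only [ha, if_false]
    rw [(hin a haB).2.2.2, hla, div_div]
    simp
  · have : Finset.univ.filter (lab · = 0) = Bᶜ := by
      ext a
      have := hlabB a
      simp only [Finset.mem_filter, Finset.mem_univ, true_and, Finset.mem_compl]
      tauto
    rw [this, Finset.card_compl, hB, Fintype.card_fin]
  · intro g hgL
    obtain ⟨h1, h2⟩ := Finset.mem_Icc.1 hgL
    obtain ⟨c, s⟩ := hg g h1 h2
    have h3 := hU₂ g
    have e : ∑ a with lab a = g, U₃ a = ∑ a with lab a = g, U₂ a :=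
      Finset.sum_congr rfl fun a ha => hU₃ a (by simp at ha ⊢; omega)
    rw [e]
    rw [if_pos ⟨h1, h2⟩] at h3
    rw [hfilt g h1] at h3 ⊢
    refine ⟨c, ?_⟩
    have h4 := mul_le_mul_of_nonneg_left h3 (Nat.cast_nonneg (α := ℝ) g)
    have h5 : (0 : ℝ) ≤ K / L := by positivity
    simp only [Pi.zero_apply, Finset.sum_const_zero] at s
    have e2 : (K : ℝ) * (1 / L) = K / L := by ring
    rw [e2] at s
    linarith

/-! ### Averaging the gaps -/

/-- Equivalently `L ^ L / L! ≤ exp L`. -/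
theorem sum_log_ratio_le (L : ℕ) : ∑ g ∈ Finset.Icc 1 L, Real.log ((L : ℝ) / g) ≤ L := by
  have hpos : ∀ g ∈ Finset.Icc 1 L, (L : ℝ) / g ≠ 0 := fun g hg => by
    have := Finset.mem_Icc.1 hg
    have h1 : (0 : ℝ) < g := by exact_mod_cast this.1
    have h2 : (0 : ℝ) < L := by exact_mod_cast (this.1.trans this.2)
    positivity
  have hfact : ∏ g ∈ Finset.Icc 1 L, g = L.factorial := by
    clear hpos
    induction L with
    | zero => rfl
    | succ k ih => rw [Finset.prod_Icc_succ_top (by omega), ih, Nat.factorial_succ, mul_comm]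
  rw [← Real.log_prod hpos, Finset.prod_div_distrib, Finset.prod_const, ← Nat.cast_prod,
    hfact, Nat.card_Icc, Nat.add_sub_cancel]
  rcases Nat.eq_zero_or_pos L with rfl | hL
  · simp
  have hL' : (0 : ℝ) < L := by exact_mod_cast hL
  rw [Real.log_le_iff_le_exp (by positivity)]
  exact Real.pow_div_factorial_le_exp _ (by positivity) L

/-- The constant of the gap: offline welfare is at least `gap * L` times online welfare. The `4` is
the loss in the bound for each label, the `5` compensates for `∑ g, log (L / g) ≤ L` weighted with
weights that agree up to a factor `4`. -/
noncomputable def gap : ℝ := Real.exp (-5) / 4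

theorem gap_pos : 0 < gap := by unfold gap; positivity

theorem log_div_gap {L g : ℝ} (hL : 0 < L) (hg : 0 < g) :
    Real.log ((g / 4) / (gap * L)) = 5 - Real.log (L / g) := by
  have : (g / 4) / (gap * L) = Real.exp 5 / (L / g) := by
    unfold gap
    rw [Real.exp_neg]
    field_simp
  rw [this, Real.log_div (by positivity) (by positivity), Real.log_exp]

theorem log_gap_mul_le {L : ℝ} (hL : 0 < L) : Real.log (gap * L) ≤ L := by
  have h := Real.log_le_sub_one_of_pos (mul_pos gap_pos hL)
  have : gap ≤ 1 := by
    unfold gap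
    have := Real.exp_le_one_iff.2 (show (-5 : ℝ) ≤ 0 by norm_num)
    linarith
  nlinarith

theorem one_add_mul_log_le_rpow {x : ℝ} (hx : 0 < x) (p : ℝ) : 1 + p * Real.log x ≤ x ^ p := by
  rw [Real.rpow_def_of_pos hx]
  have := Real.add_one_le_exp (Real.log x * p)
  linarith

/-- Comparison of `∑ u ^ p` for `0 < p ≤ 1 / L`. Each label `g` has `K * 2 ^ L` agents with offline
utility `1 / (L * 2 ^ g)` and online average at most `4 / (L * g * 2 ^ g)`; in addition there are `M`
agents with offline utility `1`, whose online utility is bounded by `1`. -/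
theorem numeric_pos {L K M : ℕ} {p : ℝ} (hL : 1 ≤ L) (hK : 8 * L ^ 2 ≤ K) (hM : M ≤ L * 2 ^ L)
    (hp : 0 < p) (hpL : p ≤ 1 / L) :
    (gap * L) ^ p * ((K * 2 ^ L) * ∑ g ∈ Finset.Icc 1 L, (4 / (L * g * 2 ^ g) : ℝ) ^ p + M) ≤
      (K * 2 ^ L) * ∑ g ∈ Finset.Icc 1 L, (1 / (L * 2 ^ g) : ℝ) ^ p + M := by
  have hL0 : (0 : ℝ) < L := by exact_mod_cast hL
  have hL1 : (1 : ℝ) ≤ L := by exact_mod_cast hL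
  set κ := gap * L with hκdef
  have hκ : 0 < κ := mul_pos gap_pos hL0
  have hKr : 8 * (L : ℝ) ^ 2 ≤ K := by exact_mod_cast hK
  have hMr : (M : ℝ) ≤ L * 2 ^ L := by exact_mod_cast hM
  have hL2 : (L : ℝ) ≤ 2 ^ L := by exact_mod_cast (Nat.lt_two_pow_self (n := L)).le
  set t : ℕ → ℝ := fun g => 4 / (L * g * 2 ^ g) with ht
  have htpos : ∀ g ∈ Finset.Icc 1 L, 0 < t g := fun g hg => by
    have : (0 : ℝ) < g := by exact_mod_cast (Finset.mem_Icc.1 hg).1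
    simp only [ht]; positivity
  have htL : 0 < t L := htpos L (by simp [hL])
  -- `t L` is the smallest weight and is at least `8⁻¹ ^ L`; the exponent `p ≤ 1 / L` undoes the power.
  have hmin : (1 / 8 : ℝ) ≤ t L ^ p := by
    have h1 : ((8 : ℝ)⁻¹ ^ L) ≤ t L := by
      have : (8 : ℝ) ^ L = 2 ^ L * 2 ^ L * 2 ^ L := by
        rw [← mul_pow, ← mul_pow]; norm_num
      simp only [ht]
      rw [inv_pow, this, inv_eq_one_div, div_le_div_iff₀ (by positivity) (by positivity)]
      have : (L : ℝ) * L ≤ 2 ^ L * 2 ^ L := by gcongr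
      nlinarith [show (0 : ℝ) < 2 ^ L by positivity]
    calc (1 / 8 : ℝ) = ((8 : ℝ)⁻¹ ^ L) ^ (1 / (L : ℝ)) := by
          rw [← Real.rpow_natCast, ← Real.rpow_mul (by norm_num), mul_one_div_cancel hL0.ne']
          norm_num
      _ ≤ ((8 : ℝ)⁻¹ ^ L) ^ p := by
          apply Real.rpow_le_rpow_of_exponent_ge (by positivity) _ hpL
          exact pow_le_one₀ (by norm_num) (by norm_num)
      _ ≤ t L ^ p := by gcongr
  have hlow : ∀ g ∈ Finset.Icc 1 L, t L ^ p ≤ t g ^ p := fun g hg => by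
    obtain ⟨h1, h2⟩ := Finset.mem_Icc.1 hg
    have h1' : (0 : ℝ) < g := by exact_mod_cast h1
    have h2' : (g : ℝ) ≤ L := by exact_mod_cast h2
    have : t L ≤ t g := by
      simp only [ht]
      gcongr
      norm_num
    gcongr
  have hup : ∀ g ∈ Finset.Icc 1 L, t g ^ p ≤ 4 * t L ^ p := fun g hg => by
    obtain ⟨h1, h2⟩ := Finset.mem_Icc.1 hg
    have h1' : (1 : ℝ) ≤ g := by exact_mod_cast h1
    have h3 : t g ≤ 4 ^ L * t L := by
      simp only [ht]
      have : (4 : ℝ) ^ L = 2 ^ L * 2 ^ L := by rw [← mul_pow]; norm_num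
      rw [this, ← mul_div_assoc, div_le_div_iff₀ (by positivity) (by positivity)]
      have h4 : (1 : ℝ) ≤ g * 2 ^ g := one_le_mul_of_one_le_of_one_le h1' (one_le_pow₀ (by norm_num))
      have h5 : (L : ℝ) * 1 ≤ 2 ^ L * (g * 2 ^ g) := by gcongr
      calc (4 : ℝ) * (L * L * 2 ^ L) = (4 * L * 2 ^ L) * (L * 1) := by ring
        _ ≤ (4 * L * 2 ^ L) * (2 ^ L * (g * 2 ^ g)) := by gcongr
        _ = _ := by ring
    calc t g ^ p ≤ (4 ^ L * t L) ^ p := Real.rpow_le_rpow (htpos g hg).le h3 hp.le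
      _ = (4 ^ L) ^ p * t L ^ p := Real.mul_rpow (by positivity) htL.le
      _ ≤ (4 ^ L) ^ (1 / (L : ℝ)) * t L ^ p := by
          gcongr
          exact one_le_pow₀ (by norm_num)
      _ = 4 * t L ^ p := by
          rw [← Real.rpow_natCast, ← Real.rpow_mul (by norm_num), mul_one_div_cancel hL0.ne',
            Real.rpow_one]
  have hlogs : L * t L ^ p ≤ ∑ g ∈ Finset.Icc 1 L, t g ^ p * (5 - Real.log ((L : ℝ) / g)) := by
    have hl0 : ∀ g ∈ Finset.Icc 1 L, 0 ≤ Real.log ((L : ℝ) / g) := fun g hg => by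
      obtain ⟨h1, h2⟩ := Finset.mem_Icc.1 hg
      have h1' : (0 : ℝ) < g := by exact_mod_cast h1
      apply Real.log_nonneg
      rw [one_le_div h1']
      exact_mod_cast h2
    have hterm : ∀ g ∈ Finset.Icc 1 L, t L ^ p * (5 - 4 * Real.log ((L : ℝ) / g)) ≤
        t g ^ p * (5 - Real.log ((L : ℝ) / g)) := fun g hg => by
      nlinarith [mul_le_mul_of_nonneg_right (hup g hg) (hl0 g hg), hlow g hg]
    refine le_trans ?_ (Finset.sum_le_sum hterm)
    rw [← Finset.mul_sum, Finset.sum_sub_distrib, ← Finset.mul_sum]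
    simp only [Finset.sum_const, Nat.card_Icc, Nat.add_sub_cancel, nsmul_eq_mul]
    have := sum_log_ratio_le L
    have h0 : 0 < t L ^ p := by positivity
    nlinarith
  have hκp : 0 < κ ^ p := by positivity
  have hmain : κ ^ p * ∑ g ∈ Finset.Icc 1 L, t g ^ p + κ ^ p * p *
      ∑ g ∈ Finset.Icc 1 L, t g ^ p * (5 - Real.log ((L : ℝ) / g)) ≤
      ∑ g ∈ Finset.Icc 1 L, (1 / (L * 2 ^ g) : ℝ) ^ p := by
    rw [Finset.mul_sum, Finset.mul_sum, ← Finset.sum_add_distrib]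
    refine Finset.sum_le_sum fun g hg => ?_
    have h1' : (0 : ℝ) < g := by exact_mod_cast (Finset.mem_Icc.1 hg).1
    have h := one_add_mul_log_le_rpow (x := (g / 4) / κ) (by positivity) p
    rw [hκdef, log_div_gap hL0 h1', ← hκdef] at h
    have e : (1 / (L * 2 ^ g) : ℝ) = κ * t g * ((g / 4) / κ) := by
      simp only [ht]; field_simp
    have htg := htpos g hg
    rw [e, Real.mul_rpow (mul_pos hκ htg).le (by positivity), Real.mul_rpow hκ.le htg.le]
    have h0 : 0 < κ ^ p * t g ^ p := by positivity
    nlinarith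
  have hgarb : κ ^ p ≤ 1 + κ ^ p * p * L := by
    have h := one_add_mul_log_le_rpow (x := κ⁻¹) (by positivity) p
    rw [Real.log_inv, Real.inv_rpow hκ.le] at h
    have h2 := log_gap_mul_le hL0
    rw [← hκdef] at h2
    have h3 : 1 - p * L ≤ (κ ^ p)⁻¹ := by nlinarith
    have h4 := mul_le_mul_of_nonneg_left h3 hκp.le
    rw [mul_inv_cancel₀ hκp.ne'] at h4
    linarith
  have hMK : (M : ℝ) * L ≤ K * 2 ^ L * ∑ g ∈ Finset.Icc 1 L, t g ^ p *
      (5 - Real.log ((L : ℝ) / g)) := by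
    have h1 : (L : ℝ) * (1 / 8) ≤ ∑ g ∈ Finset.Icc 1 L, t g ^ p *
      (5 - Real.log ((L : ℝ) / g)) := le_trans (by gcongr) hlogs
    calc (M : ℝ) * L ≤ (L * 2 ^ L) * L := by gcongr
      _ = L ^ 2 * 2 ^ L := by ring
      _ ≤ L ^ 2 * 2 ^ L * L := le_mul_of_one_le_right (by positivity) hL1
      _ = (8 * L ^ 2) * 2 ^ L * (L * (1 / 8)) := by ring
      _ ≤ _ := by gcongr
  have h1 := mul_le_mul_of_nonneg_left hmain (show (0 : ℝ) ≤ K * 2 ^ L by positivity)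
  have h2 := mul_le_mul_of_nonneg_left hgarb (show (0 : ℝ) ≤ M by positivity)
  have h3 := mul_le_mul_of_nonneg_left hMK (show (0 : ℝ) ≤ κ ^ p * p by positivity)
  simp only [ht] at h1 h3 ⊢
  nlinarith

/-- The counterpart of `numeric_pos` for `p < 0`, where the sums of `p`-th powers compare the other
way round. -/
theorem numeric_neg {L K M : ℕ} {p : ℝ} (hL : 1 ≤ L) (hK : 8 * L ^ 2 ≤ K) (hM : M ≤ L * 2 ^ L)
    (hp : p < 0) :
    (K * 2 ^ L) * ∑ g ∈ Finset.Icc 1 L, (1 / (L * 2 ^ g) : ℝ) ^ p + M ≤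
    (gap * L) ^ p * ((K * 2 ^ L) * ∑ g ∈ Finset.Icc 1 L, (4 / (L * g * 2 ^ g) : ℝ) ^ p + M) := by
  have hL0 : (0 : ℝ) < L := by exact_mod_cast hL
  have hL1 : (1 : ℝ) ≤ L := by exact_mod_cast hL
  set κ := gap * L with hκdef
  have hκ : 0 < κ := mul_pos gap_pos hL0
  have hKr : 8 * (L : ℝ) ^ 2 ≤ K := by exact_mod_cast hK
  have hMr : (M : ℝ) ≤ L * 2 ^ L := by exact_mod_cast hM
  set o : ℕ → ℝ := fun g => 1 / (L * 2 ^ g) with ho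
  have hopos : ∀ g, 0 < o g := fun g => by simp only [ho]; positivity
  have ho1 : ∀ g, 1 ≤ o g ^ p := fun g => by
    apply Real.one_le_rpow_of_pos_of_le_one_of_nonpos (hopos g) _ hp.le
    simp only [ho]
    rw [div_le_one (by positivity)]
    exact one_le_mul_of_one_le_of_one_le hL1 (one_le_pow₀ (by norm_num))
  have hanti : AntivaryOn (fun g => o g ^ p) (fun g : ℕ => Real.log ((L : ℝ) / g))
      (Finset.Icc 1 L : Finset ℕ) := by
    intro i hi j hj hij
    have hi' : (0 : ℝ) < i := by exact_mod_cast (Finset.mem_Icc.1 hi).1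
    have hj' : (0 : ℝ) < j := by exact_mod_cast (Finset.mem_Icc.1 hj).1
    have h1 : (L : ℝ) / i < L / j := by
      by_contra hcon
      exact absurd (Real.log_le_log (by positivity) (not_lt.1 hcon)) (not_le.2 hij)
    have h2 : (j : ℝ) < i := by
      rwa [div_lt_div_iff_of_pos_left hL0 hi' hj'] at h1
    have h3 : j ≤ i := by exact_mod_cast h2.le
    apply Real.rpow_le_rpow_of_nonpos (hopos i) _ hp.le
    simp only [ho]
    gcongr
    norm_num
  -- Chebyshev's sum inequality for the oppositely ordered sequences.
  have hcheb := hanti.card_mul_sum_le_sum_mul_sum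
  simp only [Nat.card_Icc, Nat.add_sub_cancel] at hcheb
  have hSum : (L : ℝ) ≤ ∑ g ∈ Finset.Icc 1 L, o g ^ p := by
    have := Finset.card_nsmul_le_sum (Finset.Icc 1 L) (fun g => o g ^ p) 1 (fun g _ => ho1 g)
    simpa using this
  have hlogs : (L : ℝ) ≤ ∑ g ∈ Finset.Icc 1 L, o g ^ p * (5 - Real.log ((L : ℝ) / g)) := by
    have h1 : ∑ g ∈ Finset.Icc 1 L, o g ^ p * Real.log ((L : ℝ) / g) ≤
        ∑ g ∈ Finset.Icc 1 L, o g ^ p := by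
      refine le_of_mul_le_mul_left (hcheb.trans ?_) hL0
      rw [mul_comm]
      exact mul_le_mul_of_nonneg_right (sum_log_ratio_le L) (hL0.le.trans hSum)
    simp only [mul_sub, Finset.sum_sub_distrib, ← Finset.sum_mul]
    linarith
  have hκp : 0 < κ ^ p := by positivity
  have hmain : ∑ g ∈ Finset.Icc 1 L, o g ^ p + (-p) *
      ∑ g ∈ Finset.Icc 1 L, o g ^ p * (5 - Real.log ((L : ℝ) / g)) ≤
      κ ^ p * ∑ g ∈ Finset.Icc 1 L, (4 / (L * g * 2 ^ g) : ℝ) ^ p := by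
    rw [Finset.mul_sum, Finset.mul_sum, ← Finset.sum_add_distrib]
    refine Finset.sum_le_sum fun g hg => ?_
    have h1' : (0 : ℝ) < g := by exact_mod_cast (Finset.mem_Icc.1 hg).1
    have h := one_add_mul_log_le_rpow (x := ((g / 4) / κ)⁻¹) (by positivity) p
    rw [Real.log_inv, hκdef, log_div_gap hL0 h1', ← hκdef] at h
    rw [← Real.mul_rpow hκ.le (by positivity)]
    have e : κ * (4 / (L * g * 2 ^ g) : ℝ) = o g * ((g / 4) / κ)⁻¹ := by
      simp only [ho]; field_simp
    rw [e, Real.mul_rpow (hopos g).le (by positivity)]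
    have h0 := ho1 g
    nlinarith
  have hgarb : 1 ≤ κ ^ p + (-p) * L := by
    have h := one_add_mul_log_le_rpow hκ p
    have h2 := log_gap_mul_le hL0
    rw [← hκdef] at h2
    nlinarith
  have hMK : (M : ℝ) * L ≤ K * 2 ^ L * ∑ g ∈ Finset.Icc 1 L, o g ^ p *
      (5 - Real.log ((L : ℝ) / g)) := by
    calc (M : ℝ) * L ≤ (L * 2 ^ L) * L := by gcongr
      _ = L ^ 2 * 2 ^ L := by ring
      _ ≤ L ^ 2 * 2 ^ L * L := le_mul_of_one_le_right (by positivity) hL1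
      _ = L ^ 2 * 2 ^ L * L := by ring
      _ ≤ K * 2 ^ L * L := by gcongr; nlinarith
      _ ≤ _ := by gcongr
  have h1 := mul_le_mul_of_nonneg_left hmain (show (0 : ℝ) ≤ K * 2 ^ L by positivity)
  have h2 := mul_le_mul_of_nonneg_left hgarb (show (0 : ℝ) ≤ M by positivity)
  have h3 := mul_le_mul_of_nonneg_left hMK (show (0 : ℝ) ≤ -p by linarith)
  simp only [ho] at h1 h3 ⊢
  nlinarith

/-! ### Welfare of the final state -/

theorem pMeanWelfare_nonneg {n : ℕ} {p : ℝ} {u : Fin n → ℝ} (hu : ∀ a, 0 ≤ u a) :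
    0 ≤ pMeanWelfare n p u := by
  unfold pMeanWelfare
  split_ifs
  · exact le_rfl
  · have : 0 ≤ ∑ a, u a ^ p := Finset.sum_nonneg fun a _ => Real.rpow_nonneg (hu a) p
    positivity

theorem pMeanWelfare_le_one {n : ℕ} (hn : 0 < n) {p : ℝ} (hp : p ≠ 0) {u : Fin n → ℝ}
    (hu0 : ∀ a, 0 ≤ u a) (hu1 : ∀ a, u a ≤ 1) : pMeanWelfare n p u ≤ 1 := by
  have hn' : (0 : ℝ) < n := by exact_mod_cast hn
  unfold pMeanWelfare
  split_ifs with h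
  · exact zero_le_one
  · have hs0 : 0 ≤ ∑ a, u a ^ p := Finset.sum_nonneg fun a _ => Real.rpow_nonneg (hu0 a) p
    rcases lt_or_gt_of_ne hp with hp | hp
    · apply Real.rpow_le_one_of_one_le_of_nonpos _ (one_div_nonpos.2 hp.le)
      rw [one_div, ← div_eq_inv_mul, one_le_div hn']
      have := Finset.card_nsmul_le_sum Finset.univ (fun a => u a ^ p) 1 (fun a _ =>
        Real.one_le_rpow_of_pos_of_le_one_of_nonpos
          ((hu0 a).lt_of_ne fun h0 => h ⟨hp, a, h0.symm⟩) (hu1 a) hp.le)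
      simpa using this
    · apply Real.rpow_le_one (by positivity) _ (by positivity)
      rw [one_div, ← div_eq_inv_mul, div_le_one hn']
      have := Finset.sum_le_card_nsmul Finset.univ (fun a => u a ^ p) 1 (fun a _ =>
        Real.rpow_le_one (hu0 a) (hu1 a) hp.le)
      simpa using this

/-- A state with unit monopolist utilities is an instance with optimum at least the welfare of `O`.
The bound `1` on all welfares makes the supremum in `OPTwelfare` meaningful. -/
theorem Reach.exists_instance {n : ℕ} (hn : 0 < n)
    {A : (k : ℕ) → (Fin (k + 1) → Fin n → ℝ) → (Fin n → ℝ)}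
    {O U : Fin n → ℝ} (hR : Reach A (fun _ => 1) O U) {p r : ℝ} (hp : p ≠ 0)
    (h : r * pMeanWelfare n p U ≤ pMeanWelfare n p O) :
    ∃ m : ℕ, ∃ v : Fin m → Fin n → ℝ,
      (∀ k a, 0 ≤ v k a) ∧ (∀ a, ∑ k, v k a = 1) ∧
      (∀ k, ∃ w : ℝ, 0 ≤ w ∧ ∀ a, v k a = 0 ∨ v k a = w) ∧
      OPTwelfare n m p v ≥ r * ALGwelfare n m p A v := by
  obtain ⟨m, v, y, hv, hb, hy, hy1, hV, hO, hU⟩ := hR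
  refine ⟨m, v, hv, hV, hb, ?_⟩
  have hU' : onlineUtilities n m A v = U := funext hU
  unfold ALGwelfare
  rw [hU']
  refine h.trans (le_csSup ⟨1, ?_⟩ ⟨y, hy, hy1, ?_⟩)
  · rintro w ⟨z, hz, hz1, rfl⟩
    refine pMeanWelfare_le_one hn hp
      (fun a => Finset.sum_nonneg fun k _ => mul_nonneg (hv k a) (hz k a)) fun a => ?_
    refine le_of_le_of_eq ?_ (hV a)
    exact Finset.sum_le_sum fun k _ => mul_le_of_le_one_right (hv k a)
      ((Finset.single_le_sum (fun b _ => hz k b) (Finset.mem_univ a)).trans (hz1 k))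
  · congr 1
    exact (funext hO).symm

theorem pMeanWelfare_compare {n : ℕ} (hn : 0 < n) {p κ : ℝ} (hp : p ≠ 0) (hκ : 0 < κ)
    {O U : Fin n → ℝ} (hO : ∀ a, 0 < O a) (hU : ∀ a, 0 ≤ U a)
    (hpos : 0 < p → κ ^ p * ∑ a, U a ^ p ≤ ∑ a, O a ^ p)
    (hneg : p < 0 → (∀ a, 0 < U a) → ∑ a, O a ^ p ≤ κ ^ p * ∑ a, U a ^ p) :
    κ * pMeanWelfare n p U ≤ pMeanWelfare n p O := by
  have hn' : (0 : ℝ) < n := by exact_mod_cast hn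
  have hO' : ¬ (p < 0 ∧ ∃ a, O a = 0) := fun ⟨_, a, ha⟩ => (hO a).ne' ha
  by_cases hc : p < 0 ∧ ∃ a, U a = 0
  · have : pMeanWelfare n p U = 0 := by unfold pMeanWelfare; rw [if_pos hc]
    rw [this, mul_zero]
    exact pMeanWelfare_nonneg fun a => (hO a).le
  unfold pMeanWelfare
  rw [if_neg hc, if_neg hO']
  have hU0 : 0 ≤ ∑ a, U a ^ p := Finset.sum_nonneg fun a _ => Real.rpow_nonneg (hU a) p
  have hκe : κ = (κ ^ p) ^ (1 / p) := by
    rw [← Real.rpow_mul hκ.le, mul_one_div_cancel hp, Real.rpow_one]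
  have hκp : 0 < κ ^ p := by positivity
  conv_lhs => rw [hκe]
  rw [← Real.mul_rpow hκp.le (by positivity)]
  rcases lt_or_gt_of_ne hp with hp' | hp'
  · have hUp : ∀ a, 0 < U a := fun a => (hU a).lt_of_ne fun h0 => hc ⟨hp', a, h0.symm⟩
    have : Nonempty (Fin n) := ⟨⟨0, hn⟩⟩
    have hOs : 0 < ∑ a, O a ^ p :=
      Finset.sum_pos (fun a _ => Real.rpow_pos_of_pos (hO a) p) Finset.univ_nonempty
    apply Real.rpow_le_rpow_of_nonpos (by positivity) _ (one_div_nonpos.2 hp'.le)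
    have h := mul_le_mul_of_nonneg_left (hneg hp' hUp) (show (0 : ℝ) ≤ 1 / n by positivity)
    linarith
  · apply Real.rpow_le_rpow (by positivity) _ (by positivity)
    have h := mul_le_mul_of_nonneg_left (hpos hp') (show (0 : ℝ) ≤ 1 / n by positivity)
    linarith

/-- Jensen's inequality for `x ^ p` with `0 < p ≤ 1`, from the tangent at `t`. -/
theorem sum_rpow_le_of_sum_le {ι : Type*} (s : Finset ι) (U : ι → ℝ) {p t : ℝ} (hp : 0 < p)
    (hp1 : p ≤ 1) (ht : 0 < t) (hU : ∀ a ∈ s, 0 ≤ U a) (hs : ∑ a ∈ s, U a ≤ s.card * t) :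
    ∑ a ∈ s, U a ^ p ≤ s.card * t ^ p := by
  have htp : 0 < t ^ p := by positivity
  have hterm : ∀ a ∈ s, U a ^ p ≤ t ^ p * (1 - p + p / t * U a) := fun a ha => by
    have h := rpow_one_add_le_one_add_mul_self (s := U a / t - 1)
      (by have := div_nonneg (hU a ha) ht.le; linarith) hp.le hp1
    rw [add_sub_cancel, Real.div_rpow (hU a ha) ht.le, div_le_iff₀ htp] at h
    refine h.trans_eq ?_
    ring
  refine (Finset.sum_le_sum hterm).trans ?_
  rw [← Finset.mul_sum, Finset.sum_add_distrib, ← Finset.mul_sum, Finset.sum_const, nsmul_eq_mul]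
  have h1 := mul_le_mul_of_nonneg_left hs (show 0 ≤ p / t by positivity)
  have e : p / t * (s.card * t) = s.card * p := by field_simp
  rw [e] at h1
  calc _ ≤ t ^ p * (s.card : ℝ) := by gcongr; linarith
    _ = _ := mul_comm _ _

/-- Jensen's inequality for `x ^ p` with `p < 0`, from the tangent at `t`. -/
theorem le_sum_rpow_of_sum_le {ι : Type*} (s : Finset ι) (U : ι → ℝ) {p t : ℝ} (hp : p < 0)
    (ht : 0 < t) (hU : ∀ a ∈ s, 0 < U a) (hs : ∑ a ∈ s, U a ≤ s.card * t) :
    s.card * t ^ p ≤ ∑ a ∈ s, U a ^ p := by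
  have htp : 0 < t ^ p := by positivity
  have hterm : ∀ a ∈ s, t ^ p * (1 - p + p / t * U a) ≤ U a ^ p := fun a ha => by
    have hx : 0 < U a / t := div_pos (hU a ha) ht
    have h := one_add_mul_log_le_rpow hx p
    have h2 := Real.log_le_sub_one_of_pos hx
    rw [Real.div_rpow (hU a ha).le ht.le] at h
    have h3 : 1 + p * (U a / t - 1) ≤ U a ^ p / t ^ p := by nlinarith
    rw [le_div_iff₀ htp] at h3
    refine le_of_eq_of_le ?_ h3
    ring
  refine le_trans ?_ (Finset.sum_le_sum hterm)
  rw [← Finset.mul_sum, Finset.sum_add_distrib, ← Finset.mul_sum, Finset.sum_const, nsmul_eq_mul]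
  have h1 := mul_le_mul_of_nonpos_left hs (div_nonpos_of_nonpos_of_nonneg hp.le ht.le)
  have e : p / t * (s.card * t) = s.card * p := by field_simp
  rw [e] at h1
  calc (s.card : ℝ) * t ^ p = t ^ p * s.card := mul_comm _ _
    _ ≤ _ := by gcongr; linarith

theorem hard_instance {n L : ℕ} (hL : 1 ≤ L) (hn : 8 * L ^ 3 * 2 ^ L ≤ n)
    {A : (k : ℕ) → (Fin (k + 1) → Fin n → ℝ) → (Fin n → ℝ)}
    (hA : ∀ k h, (∀ a, 0 ≤ A k h a) ∧ ∑ a, A k h a ≤ 1)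
    {p : ℝ} (hp : p ≠ 0) (hpL : p ≤ 1 / L) :
    ∃ O U : Fin n → ℝ, Reach A (fun _ => 1) O U ∧ (∀ a, 0 ≤ U a) ∧
      gap * L * pMeanWelfare n p U ≤ pMeanWelfare n p O := by
  have hL0 : (0 : ℝ) < L := by exact_mod_cast hL
  have hL1 : (1 : ℝ) ≤ L := by exact_mod_cast hL
  have hb : 0 < L * 2 ^ L := by positivity
  have hn0 : 0 < n := lt_of_lt_of_le (by positivity) hn
  set K := n / (L * 2 ^ L) with hKdef
  have hK : 8 * L ^ 2 ≤ K := by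
    rw [hKdef, Nat.le_div_iff_mul_le hb]
    refine le_trans (le_of_eq ?_) hn
    ring
  have hKn : K * (L * 2 ^ L) ≤ n := Nat.div_mul_le_self _ _
  obtain ⟨O, U, lab, hR, hle, hO0, hO1, hc0, hg⟩ := exists_hard_state hA hL hKn
  set M := n - K * (L * 2 ^ L) with hMdef
  have hM : M ≤ L * 2 ^ L := by
    have := Nat.lt_div_mul_add hb (a := n)
    rw [← hKdef] at this
    omega
  have hUb := hR.bounds hA
  refine ⟨O, U, hR, fun a => (hUb a).1, ?_⟩
  have hsplit : ∀ f : Fin n → ℝ, ∑ a, f a =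
      ∑ g ∈ Finset.Icc 1 L, ∑ a with lab a = g, f a + ∑ a with lab a = 0, f a := fun f => by
    have h1 : Finset.range (L + 1) = insert 0 (Finset.Icc 1 L) := by
      ext x; simp; omega
    rw [← Finset.sum_fiberwise_of_maps_to (s := Finset.univ) (t := Finset.range (L + 1)) (g := lab)
      (fun a _ => Finset.mem_range.2 (Nat.lt_succ_of_le (hle a))), h1,
      Finset.sum_insert (by simp), add_comm]
  have hKr : 8 * (L : ℝ) ^ 2 ≤ K := by exact_mod_cast hK
  have hOsum : ∑ a, O a ^ p =
      (K * 2 ^ L) * ∑ g ∈ Finset.Icc 1 L, (1 / (L * 2 ^ g) : ℝ) ^ p + M := by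
    rw [hsplit, Finset.mul_sum]
    congr 1
    · refine Finset.sum_congr rfl fun g hgL => ?_
      have h1 := (Finset.mem_Icc.1 hgL).1
      have : ∀ a ∈ Finset.univ.filter (lab · = g), O a ^ p = (1 / (L * 2 ^ g) : ℝ) ^ p := by
        intro a ha
        have ha' : lab a = g := by simpa using ha
        rw [hO1 a (by omega), ha']
      rw [Finset.sum_congr rfl this, Finset.sum_const, (hg g hgL).1, nsmul_eq_mul]
      push_cast
      ring
    · have : ∀ a ∈ Finset.univ.filter (lab · = 0), O a ^ p = 1 := by
        intro a ha
        rw [hO0 a (by simpa using ha), Real.one_rpow]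
      rw [Finset.sum_congr rfl this, Finset.sum_const, hc0, nsmul_eq_mul, mul_one]
  have hgroup : ∀ g ∈ Finset.Icc 1 L, 0 < (4 / (L * g * 2 ^ g) : ℝ) ∧
      ∑ a with lab a = g, U a ≤
        (Finset.univ.filter (lab · = g)).card * (4 / (L * g * 2 ^ g) : ℝ) := by
    intro g hgL
    obtain ⟨h1, h2⟩ := Finset.mem_Icc.1 hgL
    obtain ⟨c, s⟩ := hg g hgL
    have hg0 : (0 : ℝ) < g := by exact_mod_cast h1
    have hgL' : (g : ℝ) ≤ L := by exact_mod_cast h2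
    refine ⟨by positivity, ?_⟩
    rw [c]
    refine le_of_mul_le_mul_left (s.trans ?_) hg0
    have e : (2 : ℝ) ^ L = 2 ^ (L - g) * 2 ^ g := by rw [← pow_add]; congr 1; omega
    have e2 : L + 1 - g = (L - g) + 1 := by omega
    push_cast
    rw [e2, pow_succ, e]
    have e3 : (g : ℝ) * (K * (2 ^ (L - g) * 2 ^ g) * (4 / (L * g * 2 ^ g))) =
        K / L * 2 ^ (L - g) * 4 := by field_simp
    rw [e3]
    have h3 : (L : ℝ) ≤ K / L := by
      rw [le_div_iff₀ hL0]; nlinarith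
    have h4 : (1 : ℝ) ≤ 2 ^ (L - g) := one_le_pow₀ (by norm_num)
    have h5 : (L : ℝ) * 1 ≤ K / L * 2 ^ (L - g) := by gcongr
    nlinarith
  have hκ : 0 < gap * (L : ℝ) := mul_pos gap_pos hL0
  apply pMeanWelfare_compare hn0 hp hκ _ (fun a => (hUb a).1)
  · intro hp0
    rw [hOsum]
    refine le_trans ?_ (numeric_pos hL hK hM hp0 hpL)
    have hp1 : p ≤ 1 := hpL.trans ((div_le_one hL0).2 hL1)
    gcongr
    rw [hsplit, Finset.mul_sum]
    gcongr with g hgL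
    · obtain ⟨ht, hs⟩ := hgroup g hgL
      refine (sum_rpow_le_of_sum_le _ U hp0 hp1 ht (fun a _ => (hUb a).1) hs).trans_eq ?_
      rw [(hg g hgL).1]
      push_cast
      ring
    · have := Finset.sum_le_card_nsmul (Finset.univ.filter (lab · = 0)) (fun a => U a ^ p) 1
        (fun a _ => Real.rpow_le_one (hUb a).1 (hUb a).2 hp0.le)
      rw [hc0] at this
      simpa using this
  · intro hp0 hUpos
    rw [hOsum]
    refine le_trans (numeric_neg hL hK hM hp0) ?_
    gcongr
    rw [hsplit, Finset.mul_sum]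
    gcongr with g hgL
    · obtain ⟨ht, hs⟩ := hgroup g hgL
      refine le_of_eq_of_le ?_ (le_sum_rpow_of_sum_le _ U hp0 ht (fun a _ => hUpos a) hs)
      rw [(hg g hgL).1]
      push_cast
      ring
    · have := Finset.card_nsmul_le_sum (Finset.univ.filter (lab · = 0)) (fun a => U a ^ p) 1
        (fun a _ => Real.one_le_rpow_of_pos_of_le_one_of_nonpos (hUpos a) (hUb a).2 hp0.le)
      rw [hc0] at this
      simpa using this
  · intro a
    by_cases h0 : lab a = 0
    · rw [hO0 a h0]; exact one_pos
    · rw [hO1 a h0]; positivity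

/-- `L ≤ log n / x` with `x ≥ 5` leaves room for `K ≥ 8 L ^ 2` blocks of height `L`, because
`8 * L ^ 3 * 2 ^ L ≤ 128 ^ L ≤ exp (5 L)`. -/
theorem size_bound {n L : ℕ} {x : ℝ} (hn : 0 < n) (hx5 : 5 ≤ x)
    (hL : (L : ℝ) ≤ Real.log n / x) : 8 * L ^ 3 * 2 ^ L ≤ n := by
  have hn' : (0 : ℝ) < n := by exact_mod_cast hn
  rcases Nat.eq_zero_or_pos L with rfl | hL1
  · simp
  have h5 : 5 * (L : ℝ) ≤ Real.log n := by
    rw [le_div_iff₀ (by linarith)] at hL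
    nlinarith [Nat.cast_nonneg (α := ℝ) L]
  have h2 : (L : ℝ) ≤ 2 ^ L := by exact_mod_cast (Nat.lt_two_pow_self (n := L)).le
  have h8 : (8 : ℝ) ≤ 8 ^ L := le_self_pow₀ (by norm_num) (by omega)
  have he : (128 : ℝ) ≤ Real.exp 5 := by
    have h := Real.exp_one_gt_d9
    have : Real.exp 5 = Real.exp 1 ^ 5 := by rw [← Real.exp_nat_mul]; norm_num
    rw [this]
    calc (128 : ℝ) ≤ 2.7 ^ 5 := by norm_num
      _ ≤ _ := by gcongr; linarith
  have : (8 * (L : ℝ) ^ 3 * 2 ^ L) ≤ n := by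
    calc 8 * (L : ℝ) ^ 3 * 2 ^ L ≤ 8 ^ L * (2 ^ L) ^ 3 * 2 ^ L := by gcongr
      _ = 128 ^ L := by
          rw [← pow_mul, mul_comm L 3, pow_mul, ← mul_pow, ← mul_pow]; norm_num
      _ ≤ Real.exp 5 ^ L := by gcongr
      _ = Real.exp (5 * L) := by rw [← Real.exp_nat_mul, mul_comm]
      _ ≤ Real.exp (Real.log n) := Real.exp_le_exp.2 h5
      _ = n := Real.exp_log hn'
  exact_mod_cast this

theorem stmt_12 :
    ∃ c : ℝ, 0 < c ∧ ∃ n₀ : ℕ, ∀ n : ℕ, n₀ ≤ n →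
    ∀ A : (k : ℕ) → (Fin (k + 1) → Fin n → ℝ) → (Fin n → ℝ),
      (∀ k h, (∀ a, 0 ≤ A k h a) ∧ ∑ a, A k h a ≤ 1) →
      (∀ p : ℝ, Real.log (Real.log n) / Real.log n ≤ p → p ≤ 1 →
        ∃ m : ℕ, ∃ v : Fin m → Fin n → ℝ,
          (∀ k a, 0 ≤ v k a) ∧ (∀ a, ∑ k, v k a = 1) ∧
          (∀ k, ∃ w : ℝ, 0 ≤ w ∧ ∀ a, v k a = 0 ∨ v k a = w) ∧
          OPTwelfare n m p v ≥ (c / p) * ALGwelfare n m p A v) ∧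
      (∀ p : ℝ, p ≤ 1 → p < Real.log (Real.log n) / Real.log n → p ≠ 0 →
        ∃ m : ℕ, ∃ v : Fin m → Fin n → ℝ,
          (∀ k a, 0 ≤ v k a) ∧ (∀ a, ∑ k, v k a = 1) ∧
          (∀ k, ∃ w : ℝ, 0 ≤ w ∧ ∀ a, v k a = 0 ∨ v k a = w) ∧
          OPTwelfare n m p v ≥
            c * (Real.log n / Real.log (Real.log n)) * ALGwelfare n m p A v) := by
  refine ⟨gap / 2, half_pos gap_pos, ⌈Real.exp (Real.exp 5)⌉₊, fun n hn A hA => ?_⟩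
  have hn' : Real.exp (Real.exp 5) ≤ n := Nat.ceil_le.1 hn
  have hnpos : (0 : ℝ) < n := (Real.exp_pos _).trans_le hn'
  have hn0 : 0 < n := by exact_mod_cast hnpos
  have hlog : Real.exp 5 ≤ Real.log n := (Real.le_log_iff_exp_le hnpos).2 hn'
  have hlogpos : 0 < Real.log n := (Real.exp_pos _).trans_le hlog
  set x := Real.log (Real.log n) with hx
  have hx5 : 5 ≤ x := (Real.le_log_iff_exp_le hlogpos).2 hlog
  have hx0 : 0 < x := by linarith
  -- For `1 ≤ z ≤ log n / log (log n)` and `p ≤ 1 / z`, the construction with `⌊z⌋` levels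
  -- forces a gap of order `⌊z⌋ ≥ z / 2`.
  have key : ∀ p z : ℝ, p ≠ 0 → 1 ≤ z → z ≤ Real.log n / x → p ≤ 1 / z →
      ∃ m : ℕ, ∃ v : Fin m → Fin n → ℝ,
        (∀ k a, 0 ≤ v k a) ∧ (∀ a, ∑ k, v k a = 1) ∧
        (∀ k, ∃ w : ℝ, 0 ≤ w ∧ ∀ a, v k a = 0 ∨ v k a = w) ∧
        OPTwelfare n m p v ≥ (gap / 2 * z) * ALGwelfare n m p A v := by
    intro p z hp hz1 hz hpz
    have hL1 : 1 ≤ ⌊z⌋₊ := Nat.le_floor (by simpa using hz1)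
    have hLz : (⌊z⌋₊ : ℝ) ≤ z := Nat.floor_le (by linarith)
    have hzL : z < ⌊z⌋₊ + 1 := Nat.lt_floor_add_one z
    have hL1' : (1 : ℝ) ≤ ⌊z⌋₊ := by exact_mod_cast hL1
    obtain ⟨O, U, hR, hU, hcmp⟩ := hard_instance hL1
      (size_bound hn0 hx5 (hLz.trans hz)) hA hp
      (hpz.trans (one_div_le_one_div_of_le (by linarith) hLz))
    refine hR.exists_instance hn0 hp (le_trans ?_ hcmp)
    have := pMeanWelfare_nonneg (p := p) hU
    have hg := gap_pos
    refine mul_le_mul_of_nonneg_right ?_ this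
    nlinarith
  refine ⟨fun p hp hp1 => ?_, fun p hp1 hp hp0 => ?_⟩
  · have hppos : 0 < p := (div_pos hx0 hlogpos).trans_le hp
    have h := key p (1 / p) hppos.ne' ((one_le_div hppos).2 hp1) ?_ (by rw [one_div_one_div])
    · rwa [mul_one_div] at h
    · rw [← one_div_div x]
      exact one_div_le_one_div_of_le (div_pos hx0 hlogpos) hp
  · refine key p (Real.log n / x) hp0 ?_ le_rfl (by rw [one_div_div]; exact hp.le)
    rw [one_le_div hx0]
    have := Real.log_le_sub_one_of_pos hlogpos
    linarith
end

section
/- Let q > 0, let 0 ≤ α < q, and let L ≥ 1 be an integer. Define s_ℓ = 1 − ((q − α)/(2·∑_{i=1}^L q^i + 1)) · ∑_{i=L−ℓ}^{L−1} q^i for 0 ≤ ℓ ≤ L. Then s_0 = 1, the sequence s_0 > s_1 > … > s_L is strictly decreasing, s_L ≥ 0, and s_{ℓ−1} + q·(1 − s_ℓ) = s_L·(1 + q) − α for every 1 ≤ ℓ ≤ L. -/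
/-!
Write `A ℓ = ∑_{i=L-ℓ}^{L-1} q^i` and `c = (q - α) / (2 ∑_{i=1}^L q^i + 1) > 0`, so that
`s ℓ = 1 - c * A ℓ`. Everything follows from `A (ℓ+1) = A ℓ + q^(L-ℓ-1)` (monotonicity) and
`q * A (ℓ+1) = A ℓ + q^L` (shifting exponents). The latter turns the left side of the recurrence
into `1 + c * q^L`, independent of `ℓ`; since `∑_{i=1}^L q^i = q * A L` and
`q - α = c * (2 * q * A L + 1)`, the right side equals the same number. The same formula for
`q - α` gives `c * A L ≤ 1`.
-/

/-- Lowering the bottom index of the block `∑_{i=L-ℓ}^{L-1} q^i` adds its new lowest power. -/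
lemma block_succ (q : ℝ) (L ℓ : ℕ) (h : ℓ < L) :
    ∑ i ∈ Finset.Icc (L - (ℓ + 1)) (L - 1), q ^ i =
      ∑ i ∈ Finset.Icc (L - ℓ) (L - 1), q ^ i + q ^ (L - (ℓ + 1)) := by
  have hset : Finset.Icc (L - (ℓ + 1)) (L - 1) =
      insert (L - (ℓ + 1)) (Finset.Icc (L - ℓ) (L - 1)) := by
    ext i
    simp only [Finset.mem_Icc, Finset.mem_insert]
    omega
  rw [hset, Finset.sum_insert, add_comm]
  simp only [Finset.mem_Icc]
  omega

/-- For `L ≥ 1` the block of length zero is empty, as `L - 1 < L`. -/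
lemma block_zero (q : ℝ) (L : ℕ) (hL : 1 ≤ L) :
    ∑ i ∈ Finset.Icc (L - 0) (L - 1), q ^ i = 0 := by
  rw [Finset.Icc_eq_empty (by omega), Finset.sum_empty]

/-- Multiplying a block by `q` shifts its exponents, removing the lowest power and adding `q^L`. -/
lemma mul_block_succ (q : ℝ) (L ℓ : ℕ) (h : ℓ < L) :
    q * ∑ i ∈ Finset.Icc (L - (ℓ + 1)) (L - 1), q ^ i =
      ∑ i ∈ Finset.Icc (L - ℓ) (L - 1), q ^ i + q ^ L := by
  induction ℓ with
  | zero =>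
    rw [block_succ q L 0 h, block_zero q L (by omega)]
    simp only [zero_add]
    rw [← pow_succ']
    congr 1
    omega
  | succ k ih =>
    have hp : q * q ^ (L - (k + 1 + 1)) = q ^ (L - (k + 1)) := by
      rw [← pow_succ']
      congr 1
      omega
    rw [block_succ q L (k + 1) h, mul_add, ih (by omega), hp, block_succ q L k (by omega)]
    ring

lemma sum_Icc_one_eq_mul_block (q : ℝ) (L : ℕ) (hL : 1 ≤ L) :
    ∑ i ∈ Finset.Icc 1 L, q ^ i = q * ∑ i ∈ Finset.Icc (L - L) (L - 1), q ^ i := by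
  obtain ⟨n, rfl⟩ : ∃ n, L = n + 1 := ⟨L - 1, by omega⟩
  rw [mul_block_succ q (n + 1) n (by omega), Finset.sum_Icc_succ_top (by omega)]
  simp

theorem stmt_13
    (q α : ℝ) (hq : 0 < q) (hα0 : 0 ≤ α) (hαq : α < q)
    (L : ℕ) (hL : 1 ≤ L)
    (s : ℕ → ℝ)
    (hs : ∀ ℓ ≤ L, s ℓ = 1 -
      ((q - α) / (2 * (∑ i ∈ Finset.Icc 1 L, q ^ i) + 1)) *
        ∑ i ∈ Finset.Icc (L - ℓ) (L - 1), q ^ i) :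
    s 0 = 1 ∧
    (∀ ℓ, ℓ < L → s (ℓ + 1) < s ℓ) ∧
    0 ≤ s L ∧
    (∀ ℓ, 1 ≤ ℓ → ℓ ≤ L →
      s (ℓ - 1) + q * (1 - s ℓ) = s L * (1 + q) - α) := by
  set A : ℕ → ℝ := fun ℓ => ∑ i ∈ Finset.Icc (L - ℓ) (L - 1), q ^ i with hA
  have hA0 : A 0 = 0 := block_zero q L hL
  have hstep : ∀ ℓ, ℓ < L → A (ℓ + 1) = A ℓ + q ^ (L - (ℓ + 1)) := block_succ q L
  have hmul : ∀ ℓ, ℓ < L → q * A (ℓ + 1) = A ℓ + q ^ L := mul_block_succ q L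
  have hS : ∑ i ∈ Finset.Icc 1 L, q ^ i = q * A L := sum_Icc_one_eq_mul_block q L hL
  rw [hS] at hs
  have hT : 0 ≤ A L := Finset.sum_nonneg fun i _ => by positivity
  have hD : 0 < 2 * (q * A L) + 1 := by positivity
  set c : ℝ := (q - α) / (2 * (q * A L) + 1) with hc
  have hcpos : 0 < c := div_pos (by linarith) hD
  have hcD : c * (2 * (q * A L) + 1) = q - α := div_mul_cancel₀ _ hD.ne'
  have hs' : ∀ ℓ ≤ L, s ℓ = 1 - c * A ℓ := hs
  refine ⟨?_, ?_, ?_, ?_⟩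
  · rw [hs' 0 (by omega), hA0]
    ring
  · intro ℓ hℓ
    rw [hs' _ hℓ, hs' _ hℓ.le, hstep ℓ hℓ]
    have : 0 < c * q ^ (L - (ℓ + 1)) := by positivity
    linarith
  · rw [hs' L le_rfl]
    -- Multiplied by `q`, the claim `c * A L ≤ 1` follows from `2 * c * q * A L ≤ q - α ≤ q`.
    have h0 : 0 ≤ c * A L := by positivity
    have h1 : q * (c * A L) ≤ q * 1 := by nlinarith
    linarith [le_of_mul_le_mul_left h1 hq]
  · intro ℓ h1 hℓ
    obtain ⟨k, rfl⟩ : ∃ k, ℓ = k + 1 := ⟨ℓ - 1, by omega⟩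
    -- Comparing the two relations at `ℓ = L - 1` gives the geometric sum identity.
    have hgeom : q * A L + 1 = A L + q ^ L := by
      have e1 := hstep (L - 1) (by omega)
      have e2 := hmul (L - 1) (by omega)
      rw [Nat.sub_add_cancel hL] at e1 e2
      rw [Nat.sub_self, pow_zero] at e1
      linarith
    rw [Nat.add_sub_cancel, hs' k (by omega), hs' _ hℓ, hs' L le_rfl]
    linear_combination c * hmul k (by omega) - c * hgeom + hcD
end

section
/- Let p < 0 and q = |p|, let n ≥ 1, let L ≥ 1 be an integer, let α ≥ 0, and let 1 = s_0 ≥ s_1 ≥ … ≥ s_L ≥ 0 be reals satisfying s_{ℓ−1} + q·(1 − s_ℓ) = s_L·(1 + q) − α for every 1 ≤ ℓ ≤ L. Then ((1/n) · (n^{s_L} · (n^{−s_L})^p + ∑_{ℓ=1}^L (n^{s_{ℓ−1}} − n^{s_ℓ}) · (n^{s_ℓ − 1})^p))^{1/p} ≥ (1 + L · n^{−α})^{−1/q} · n^{(1 − s_L·(q+1))/q}. -/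
/-!
Write `p = -q` with `q > 0`. The agents with utility `n ^ (-s L)` contribute exactly
`n ^ (s L * (1 + q))` to the sum of `p`-th powers. After dropping the subtracted mass `n ^ (s ℓ)`,
the `ℓ`-th remaining group contributes at most `n ^ (s (ℓ - 1) + q * (1 - s ℓ))`, which the
recursion identifies with `n ^ (s L * (1 + q)) * n ^ (-α)`. Hence the mean of the `p`-th powers is
at most `(1 + L * n ^ (-α)) * n ^ (s L * (q + 1) - 1)`, and the decreasing map `x ↦ x ^ (1 / p)`
turns this upper bound into the claimed lower bound. Monotonicity of `s` makes the masses
nonnegative, so that the mean is positive and this map is indeed decreasing there.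
-/

open Real

theorem stmt_15
    (p q : ℝ) (hp : p < 0) (hq : q = |p|)
    (n : ℕ) (hn : 1 ≤ n)
    (L : ℕ) (hL : 1 ≤ L)
    (α : ℝ) (hα : 0 ≤ α)
    (s : ℕ → ℝ)
    (hs0 : s 0 = 1)
    (hs_mono : ∀ ℓ, ℓ < L → s (ℓ + 1) ≤ s ℓ)
    (hsL : 0 ≤ s L)
    (hrec : ∀ ℓ, 1 ≤ ℓ → ℓ ≤ L →
      s (ℓ - 1) + q * (1 - s ℓ) = s L * (1 + q) - α) :
    ((1 / (n : ℝ)) * ((n : ℝ) ^ (s L) * ((n : ℝ) ^ (-(s L))) ^ p +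
        ∑ ℓ ∈ Finset.Icc 1 L,
          ((n : ℝ) ^ (s (ℓ - 1)) - (n : ℝ) ^ (s ℓ)) *
            ((n : ℝ) ^ (s ℓ - 1)) ^ p)) ^ (1 / p) ≥
      (1 + (L : ℝ) * (n : ℝ) ^ (-α)) ^ (-(1 / q)) *
        (n : ℝ) ^ ((1 - s L * (q + 1)) / q) := by
  have hqp : p = -q := by rw [hq, abs_of_neg hp]; ring
  have hq0 : 0 < q := by linarith
  subst hqp
  have hn1 : (1 : ℝ) ≤ n := by exact_mod_cast hn
  have hn0 : (0 : ℝ) < n := by linarith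
  have hlast : (n : ℝ) ^ (s L) * ((n : ℝ) ^ (-(s L))) ^ (-q) = (n : ℝ) ^ (s L * (1 + q)) := by
    rw [← rpow_mul hn0.le, ← rpow_add hn0]
    congr 1
    ring
  have hterm_nonneg : ∀ ℓ ∈ Finset.Icc 1 L,
      0 ≤ ((n : ℝ) ^ (s (ℓ - 1)) - (n : ℝ) ^ (s ℓ)) * ((n : ℝ) ^ (s ℓ - 1)) ^ (-q) := by
    intro ℓ hℓ
    obtain ⟨h1, h2⟩ := Finset.mem_Icc.mp hℓ
    have hs : s ℓ ≤ s (ℓ - 1) := by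
      have := hs_mono (ℓ - 1) (by omega)
      rwa [Nat.sub_add_cancel h1] at this
    exact mul_nonneg (sub_nonneg.mpr (rpow_le_rpow_of_exponent_le hn1 hs)) (by positivity)
  have hterm_le : ∀ ℓ ∈ Finset.Icc 1 L,
      ((n : ℝ) ^ (s (ℓ - 1)) - (n : ℝ) ^ (s ℓ)) * ((n : ℝ) ^ (s ℓ - 1)) ^ (-q)
        ≤ (n : ℝ) ^ (s L * (1 + q)) * (n : ℝ) ^ (-α) := by
    intro ℓ hℓ
    obtain ⟨h1, h2⟩ := Finset.mem_Icc.mp hℓ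
    calc ((n : ℝ) ^ (s (ℓ - 1)) - (n : ℝ) ^ (s ℓ)) * ((n : ℝ) ^ (s ℓ - 1)) ^ (-q)
        ≤ (n : ℝ) ^ (s (ℓ - 1)) * ((n : ℝ) ^ (s ℓ - 1)) ^ (-q) :=
          mul_le_mul_of_nonneg_right (sub_le_self _ (by positivity)) (by positivity)
      _ = (n : ℝ) ^ (s L * (1 + q)) * (n : ℝ) ^ (-α) := by
          rw [← rpow_mul hn0.le, ← rpow_add hn0, ← rpow_add hn0]
          congr 1
          linarith [hrec ℓ h1 h2]
  have hsum_nonneg := Finset.sum_nonneg hterm_nonneg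
  have hsum_le := Finset.sum_le_card_nsmul _ _ _ hterm_le
  rw [Nat.card_Icc, Nat.add_sub_cancel, nsmul_eq_mul] at hsum_le
  rw [hlast]
  set S := ∑ ℓ ∈ Finset.Icc 1 L,
    ((n : ℝ) ^ (s (ℓ - 1)) - (n : ℝ) ^ (s ℓ)) * ((n : ℝ) ^ (s ℓ - 1)) ^ (-q)
  have hmean_pos : 0 < 1 / (n : ℝ) * ((n : ℝ) ^ (s L * (1 + q)) + S) := by positivity
  have hmean_le : 1 / (n : ℝ) * ((n : ℝ) ^ (s L * (1 + q)) + S)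
      ≤ (1 + (L : ℝ) * (n : ℝ) ^ (-α)) * (n : ℝ) ^ (s L * (q + 1) - 1) := by
    rw [rpow_sub hn0, rpow_one, add_comm q 1]
    calc 1 / (n : ℝ) * ((n : ℝ) ^ (s L * (1 + q)) + S)
        ≤ 1 / (n : ℝ) * ((n : ℝ) ^ (s L * (1 + q))
            + L * ((n : ℝ) ^ (s L * (1 + q)) * (n : ℝ) ^ (-α))) := by gcongr
      _ = _ := by ring
  have hrhs : (1 + (L : ℝ) * (n : ℝ) ^ (-α)) ^ (-(1 / q)) * (n : ℝ) ^ ((1 - s L * (q + 1)) / q)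
      = ((1 + (L : ℝ) * (n : ℝ) ^ (-α)) * (n : ℝ) ^ (s L * (q + 1) - 1)) ^ (1 / (-q)) := by
    rw [mul_rpow (by positivity) (by positivity), ← rpow_mul hn0.le, one_div_neg_eq_neg_one_div]
    congr 2
    ring
  rw [ge_iff_le, hrhs]
  exact rpow_le_rpow_of_nonpos hmean_pos hmean_le (one_div_nonpos.mpr hp.le)
end

section
/- (Hardness from Nash to harmonic welfare.) For every ε > 0 and every δ ∈ (0,1] there exists n₀ ∈ ℕ such that for every n ≥ n₀, every real p with −1 ≤ p ≤ −δ, and every deterministic online algorithm A for n agents, there exists an instance v with unit monopolist utilities, in which for every item k there is some w_k ≥ 0 with v k a ∈ {0, w_k} for all agents a, such that OPT_p(v) ≥ n^{|p|/(|p|+1) − ε} · ALG_{A,p}(v). -/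
/-!
Write `q = -p ∈ [δ, 1]`. The adversary halves a set of agents repeatedly. It starts with all `n`
agents; shared item `k` is worth `2^{-(k+1)}` to each of the roughly `n / 2^k` agents of the
current set `S k`, and `S (k+1)` consists of half of `S k`, chosen among those to whom the
algorithm gave at most twice the average share (`exists_lower_half`, `survivors`). A survivor thus
gains only `O(1/n)` in every round. After `L` rounds one more item, worth the missing `2^{-L}`, is
shared by `S L`, and finally every agent receives a personal item completing its monopolist
utility to `1`; it is worthless to `S L` and worth `2^{-(i+1)}` to an agent that left after
item `i`.

Online, the agents in `S (L+1)` have utility `O(L/n)` (`online_utility_le`), so the power sum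
`∑ u^{-q}` is at least of order `(n / 2^L) · (n / L)^q`. Offline, all shared items are split
evenly within `S L` and personal items go to their owners; the power sum is at most
`2 n L + |S L|^{1+q}` (`offline_powerSum`). With `2^L ≈ n^{q/(q+1)}` the last term is at most `n`,
and the ratio of the power sums is `n^{q²/(q+1)}` up to a factor `O(L²)`. Taking `q`-th roots gives
the exponent `q/(q+1)`, and the polylogarithmic factor is absorbed by `n^ε` because `q ≥ δ`
(`eventually_polylog`).
-/

open Real

/-! ### The adaptive halving of the set of agents -/

open Finset in
/-- If a resource of total amount at most `1` is split, at least half of any set `T` of agents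
receive at most twice the average share `1 / |T|`. -/
lemma exists_lower_half {n : ℕ} (f : Fin n → ℝ) (hf : ∀ a, 0 ≤ f a) (hs : ∑ a, f a ≤ 1)
    (T : Finset (Fin n)) :
    ∃ T' ⊆ T, #T' = #T / 2 ∧ ∀ b ∈ T', f b * (#T : ℝ) ≤ 2 := by
  have hgood : (#(T.filter fun b => ¬ f b * (#T : ℝ) ≤ 2) : ℝ) * 2 ≤ #T := by
    calc (#(T.filter fun b => ¬ f b * (#T : ℝ) ≤ 2) : ℝ) * 2
        = ∑ b ∈ T.filter (fun b => ¬ f b * (#T : ℝ) ≤ 2), (2 : ℝ) := by simp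
      _ ≤ ∑ b ∈ T.filter (fun b => ¬ f b * (#T : ℝ) ≤ 2), f b * (#T : ℝ) := by
          refine sum_le_sum fun b hb => ?_
          have := (mem_filter.1 hb).2
          linarith
      _ = (∑ b ∈ T.filter (fun b => ¬ f b * (#T : ℝ) ≤ 2), f b) * (#T : ℝ) := by
          rw [sum_mul]
      _ ≤ 1 * (#T : ℝ) := by
          gcongr
          exact (sum_le_sum_of_subset_of_nonneg (subset_univ _) fun a _ _ => hf a).trans hs
      _ = #T := one_mul _
  have hgood' : #(T.filter fun b => ¬ f b * (#T : ℝ) ≤ 2) * 2 ≤ #T := by exact_mod_cast hgood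
  have hadd := card_filter_add_card_filter_not (s := T) (fun b => f b * (#T : ℝ) ≤ 2)
  obtain ⟨T', hT', hc⟩ := exists_subset_card_eq
    (s := T.filter fun b => f b * (#T : ℝ) ≤ 2) (n := #T / 2) (by omega)
  exact ⟨T', hT'.trans (filter_subset _ _), hc, fun b hb => (mem_filter.1 (hT' hb)).2⟩

/-- A lower half of `T` with respect to `f`: a subset of half the size on which `f` is at most
`2 / |T|`, when there is one; `T` itself otherwise. -/
noncomputable def lowerHalf {n : ℕ} (f : Fin n → ℝ) (T : Finset (Fin n)) : Finset (Fin n) :=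
  open Classical in
  if h : ∃ T' ⊆ T, T'.card = T.card / 2 ∧ ∀ b ∈ T', f b * (T.card : ℝ) ≤ 2 then h.choose else T

/-- The nested sets of surviving agents chosen by the adversary. Item `k` has value `w k` for the agents in
`survivors A w k` and value `0` for the others; the next set is a lower half with respect to the
shares of item `k` handed out by the algorithm. -/
noncomputable def survivors {n : ℕ} (A : (k : ℕ) → (Fin (k + 1) → Fin n → ℝ) → (Fin n → ℝ))
    (w : ℕ → ℝ) : ℕ → Finset (Fin n)
  | 0 => Finset.univ
  | k + 1 => lowerHalf
      (A k (fun i a => if a ∈ survivors A w i.1 then w i.1 else 0)) (survivors A w k)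
  termination_by k => k

lemma survivors_succ {n : ℕ} (A : (k : ℕ) → (Fin (k + 1) → Fin n → ℝ) → (Fin n → ℝ))
    (hA : ∀ k h, (∀ a, 0 ≤ A k h a) ∧ ∑ a, A k h a ≤ 1) (w : ℕ → ℝ) (k : ℕ) :
    survivors A w (k + 1) ⊆ survivors A w k ∧
    (survivors A w (k + 1)).card = (survivors A w k).card / 2 ∧
    ∀ b ∈ survivors A w (k + 1),
      A k (fun i a => if a ∈ survivors A w i.1 then w i.1 else 0) b
        * ((survivors A w k).card : ℝ) ≤ 2 := by
  have h := exists_lower_half (A k (fun i a => if a ∈ survivors A w i.1 then w i.1 else 0))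
    (hA _ _).1 (hA _ _).2 (survivors A w k)
  rw [survivors, lowerHalf, dif_pos h]
  exact h.choose_spec

/-! ### Comparison of `p`-mean welfares -/

/-- Welfare comparison for `p < 0`, in terms of the power sums `∑ u ^ p`. -/
lemma pMean_compare {n : ℕ} (hn : 0 < n) {p c : ℝ} (hp : p < 0) (hc : 0 < c)
    (uo ua : Fin n → ℝ) (ho : ∀ a, 0 < uo a) (ha : ∀ a, 0 ≤ ua a)
    (h : (∀ a, 0 < ua a) → (∑ a, uo a ^ p) * c ^ (-p) ≤ ∑ a, ua a ^ p) :
    c * pMeanWelfare n p ua ≤ pMeanWelfare n p uo := by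
  have hn' : (0 : ℝ) < n := by exact_mod_cast hn
  have : Nonempty (Fin n) := ⟨⟨0, hn⟩⟩
  have hso : 0 < ∑ a, uo a ^ p :=
    Finset.sum_pos (fun a _ => rpow_pos_of_pos (ho a) _) Finset.univ_nonempty
  have hO : pMeanWelfare n p uo = ((1 / (n : ℝ)) * ∑ a, uo a ^ p) ^ (1 / p) := by
    rw [pMeanWelfare, if_neg]
    rintro ⟨_, a, h0⟩
    exact (ho a).ne' h0
  rw [hO]
  by_cases hz : ∃ a, ua a = 0
  · rw [pMeanWelfare, if_pos ⟨hp, hz⟩, mul_zero]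
    positivity
  · push Not at hz
    have ha' : ∀ a, 0 < ua a := fun a => lt_of_le_of_ne (ha a) (hz a).symm
    rw [pMeanWelfare, if_neg (by rintro ⟨_, a, h0⟩; exact hz a h0)]
    have hcp : (c ^ (-p)) ^ (1 / p) = c⁻¹ := by
      rw [← rpow_mul hc.le, show -p * (1 / p) = -1 by field_simp [hp.ne], rpow_neg_one]
    have hpos : 0 < c ^ (-p) * ((1 / (n : ℝ)) * ∑ a, uo a ^ p) := by positivity
    have key : ((1 / (n : ℝ)) * ∑ a, ua a ^ p) ^ (1 / p)
        ≤ (c ^ (-p) * ((1 / (n : ℝ)) * ∑ a, uo a ^ p)) ^ (1 / p) := by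
      refine rpow_le_rpow_of_nonpos hpos ?_ (one_div_nonpos.2 hp.le)
      have := mul_le_mul_of_nonneg_left (h ha') (by positivity : 0 ≤ 1 / (n : ℝ))
      linarith
    calc c * ((1 / (n : ℝ)) * ∑ a, ua a ^ p) ^ (1 / p)
        ≤ c * (c ^ (-p) * ((1 / (n : ℝ)) * ∑ a, uo a ^ p)) ^ (1 / p) := by gcongr
      _ = c * (c⁻¹ * ((1 / (n : ℝ)) * ∑ a, uo a ^ p) ^ (1 / p)) := by
          rw [mul_rpow (by positivity) (by positivity), hcp]
      _ = _ := by rw [← mul_assoc, mul_inv_cancel₀ hc.ne', one_mul]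

lemma pMean_le_one {n : ℕ} (hn : 0 < n) {p : ℝ} (hp : p < 0)
    (u : Fin n → ℝ) (h0 : ∀ a, 0 ≤ u a) (h1 : ∀ a, u a ≤ 1) : pMeanWelfare n p u ≤ 1 := by
  have h := pMean_compare hn hp one_pos (fun _ => 1) u (fun _ => one_pos) h0 (by
    intro hpos
    rw [one_rpow, one_rpow, mul_one]
    refine Finset.sum_le_sum fun a _ => ?_
    exact one_le_rpow_of_pos_of_le_one_of_nonpos (hpos a) (h1 a) hp.le)
  have hn' : (n : ℝ) ≠ 0 := by exact_mod_cast hn.ne'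
  simpa [pMeanWelfare, hn'] using h

/-- The welfare of a single feasible allocation is a lower bound for the optimum. The supremum is
over a set bounded by `1` because no utility exceeds the monopolist utility. -/
lemma le_OPT {n m : ℕ} (hn : 0 < n) {p : ℝ} (hp : p < 0) (v : Fin m → Fin n → ℝ)
    (hv : ∀ k a, 0 ≤ v k a) (hv1 : ∀ a, ∑ k, v k a = 1) (y : Fin m → Fin n → ℝ)
    (hy : ∀ k a, 0 ≤ y k a) (hy1 : ∀ k, ∑ a, y k a ≤ 1) :
    pMeanWelfare n p (fun a => ∑ k, v k a * y k a) ≤ OPTwelfare n m p v := by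
  refine le_csSup ⟨1, ?_⟩ ⟨y, hy, hy1, rfl⟩
  rintro _ ⟨z, hz, hz1, rfl⟩
  refine pMean_le_one hn hp _ (fun a => Finset.sum_nonneg fun k _ => mul_nonneg (hv k a) (hz k a))
    fun a => ?_
  rw [← hv1 a]
  refine Finset.sum_le_sum fun k _ => mul_le_of_le_one_right (hv k a) ?_
  exact (Finset.single_le_sum (fun b _ => hz k b) (Finset.mem_univ a)).trans (hz1 k)

/-! ### The hard instance -/

/-- Values of the shared items: `1/2, 1/4, …, 2^{-L}` for items `0, …, L - 1`, and `2^{-L}` once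
more for item `L`, so that they add up to `1`. -/
noncomputable def sharedWeight (L k : ℕ) : ℝ := if k < L then (1 / 2) ^ (k + 1) else (1 / 2) ^ L

/-- What is missing from the unit monopolist utility of agent `a` after the shared items. -/
noncomputable def missing {n : ℕ} (L : ℕ) (S : ℕ → Finset (Fin n)) (a : Fin n) : ℝ :=
  1 - ∑ k ∈ Finset.range (L + 1), if a ∈ S k then sharedWeight L k else 0

/-- The hard instance: items `0, …, L` are shared by the sets `S 0, …, S L`; item `L + 1 + a` is
the personal item of agent `a`, completing the monopolist utility of `a` to `1`. -/
noncomputable def hardValue {n : ℕ} (L : ℕ) (S : ℕ → Finset (Fin n)) (k : ℕ) (a : Fin n) : ℝ :=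
  if k < L + 1 then (if a ∈ S k then sharedWeight L k else 0)
  else if k = L + 1 + a then missing L S a else 0

lemma sharedWeight_nonneg (L k : ℕ) : 0 ≤ sharedWeight L k := by
  unfold sharedWeight; split_ifs <;> positivity

lemma sharedWeight_le (L k : ℕ) (hk : k ≤ L) : sharedWeight L k ≤ (1 / 2) ^ k := by
  unfold sharedWeight
  split_ifs with h
  · rw [pow_succ]; nlinarith [pow_pos (by norm_num : (0 : ℝ) < 1 / 2) k]
  · rw [show k = L by omega]

/-- Partial sums of the dyadic weights seen by one agent: either the agent is still present, or
the part missing to `1` is `2^{-(i+1)}` where `i` is the last index at which it was present. -/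
lemma dyadic_missing {n : ℕ} (S : ℕ → Finset (Fin n)) (h0 : S 0 = Finset.univ)
    (hsub : ∀ k, S (k + 1) ⊆ S k) (a : Fin n) (j : ℕ) :
    (a ∈ S j → 1 - ∑ k ∈ Finset.range j, (if a ∈ S k then ((1 : ℝ) / 2) ^ (k + 1) else 0)
      = (1 / 2) ^ j) ∧
    (a ∉ S j → ∃ i < j, a ∈ S i ∧
      1 - ∑ k ∈ Finset.range j, (if a ∈ S k then ((1 : ℝ) / 2) ^ (k + 1) else 0)
        = (1 / 2) ^ (i + 1)) := by
  induction j with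
  | zero => simp [h0]
  | succ j ih =>
    rw [Finset.sum_range_succ]
    by_cases hj : a ∈ S j
    · have h := ih.1 hj
      have h' : 1 - (∑ k ∈ Finset.range j, (if a ∈ S k then ((1 : ℝ) / 2) ^ (k + 1) else 0)
          + if a ∈ S j then ((1 : ℝ) / 2) ^ (j + 1) else 0) = (1 / 2) ^ (j + 1) := by
        rw [if_pos hj, ← sub_sub, h]; ring
      exact ⟨fun _ => h', fun _ => ⟨j, by omega, hj, h'⟩⟩
    · refine ⟨fun hc => absurd (hsub j hc) hj, fun _ => ?_⟩
      obtain ⟨i, hi, hia, h⟩ := ih.2 hj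
      exact ⟨i, by omega, hia, by rw [if_neg hj, add_zero, h]⟩

lemma missing_eq {n : ℕ} (L : ℕ) (S : ℕ → Finset (Fin n)) (a : Fin n) :
    missing L S a = 1 - ∑ k ∈ Finset.range L, (if a ∈ S k then ((1 : ℝ) / 2) ^ (k + 1) else 0)
      - if a ∈ S L then (1 / 2) ^ L else 0 := by
  rw [missing, Finset.sum_range_succ, ← sub_sub]
  congr 1
  · congr 1
    refine Finset.sum_congr rfl fun k hk => ?_
    simp [sharedWeight, Finset.mem_range.1 hk]
  · simp [sharedWeight]

lemma missing_of_mem {n : ℕ} {L : ℕ} {S : ℕ → Finset (Fin n)} (h0 : S 0 = Finset.univ)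
    (hsub : ∀ k, S (k + 1) ⊆ S k) {a : Fin n} (ha : a ∈ S L) : missing L S a = 0 := by
  rw [missing_eq, (dyadic_missing S h0 hsub a L).1 ha, if_pos ha, sub_self]

lemma missing_of_not_mem {n : ℕ} {L : ℕ} {S : ℕ → Finset (Fin n)} (h0 : S 0 = Finset.univ)
    (hsub : ∀ k, S (k + 1) ⊆ S k) {a : Fin n} (ha : a ∉ S L) :
    ∃ i < L, a ∈ S i ∧ missing L S a = (1 / 2) ^ (i + 1) := by
  obtain ⟨i, hi, hia, h⟩ := (dyadic_missing S h0 hsub a L).2 ha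
  exact ⟨i, hi, hia, by rw [missing_eq, h, if_neg ha, sub_zero]⟩

lemma missing_nonneg {n : ℕ} {L : ℕ} {S : ℕ → Finset (Fin n)} (h0 : S 0 = Finset.univ)
    (hsub : ∀ k, S (k + 1) ⊆ S k) (a : Fin n) : 0 ≤ missing L S a := by
  by_cases ha : a ∈ S L
  · exact (missing_of_mem h0 hsub ha).ge
  · obtain ⟨i, -, -, h⟩ := missing_of_not_mem h0 hsub ha
    rw [h]; positivity

lemma hardValue_nonneg {n : ℕ} {L : ℕ} {S : ℕ → Finset (Fin n)} (h0 : S 0 = Finset.univ)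
    (hsub : ∀ k, S (k + 1) ⊆ S k) (k : ℕ) (a : Fin n) : 0 ≤ hardValue L S k a := by
  have := sharedWeight_nonneg L k
  have := missing_nonneg (L := L) h0 hsub a
  unfold hardValue; split_ifs <;> first | assumption | exact le_rfl

/-- Any utility in the hard instance splits into the part from the shared items and the part from
the personal item. -/
lemma hardValue_sum {n : ℕ} (L : ℕ) (S : ℕ → Finset (Fin n)) (a : Fin n)
    (y : Fin (L + 1 + n) → ℝ) :
    ∑ k, hardValue L S k.1 a * y k =
      (∑ k : Fin (L + 1), (if a ∈ S k then sharedWeight L k else 0) * y (Fin.castAdd n k))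
        + missing L S a * y (Fin.natAdd (L + 1) a) := by
  rw [Fin.sum_univ_add]
  congr 1
  · refine Finset.sum_congr rfl fun k _ => ?_
    have hk : k.1 < L + 1 := k.2
    simp only [hardValue, Fin.val_castAdd, hk, if_true]
  · have hL : ∀ b : ℕ, ¬ L + 1 + b < L + 1 := by omega
    rw [Finset.sum_eq_single a]
    · simp only [hardValue, Fin.val_natAdd, hL, if_false, if_true]
    · intro b _ hb
      have : (b : ℕ) ≠ a := fun h => hb (Fin.ext h)
      simp only [hardValue, Fin.val_natAdd, hL, if_false, add_right_inj, this, zero_mul]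
    · simp

lemma hardValue_sum_one {n : ℕ} (L : ℕ) (S : ℕ → Finset (Fin n)) (a : Fin n) :
    ∑ k : Fin (L + 1 + n), hardValue L S k.1 a = 1 := by
  have h := hardValue_sum L S a (fun _ => 1)
  simp only [mul_one] at h
  rw [h, missing, Fin.sum_univ_eq_sum_range (fun k => if a ∈ S k then sharedWeight L k else 0)]
  ring

lemma sum_sharedWeight {n : ℕ} {L : ℕ} {S : ℕ → Finset (Fin n)} (h0 : S 0 = Finset.univ)
    (hsub : ∀ k, S (k + 1) ⊆ S k) {a : Fin n} (ha : a ∈ S L) :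
    ∑ k : Fin (L + 1), (if a ∈ S k then sharedWeight L k else 0) = 1 := by
  rw [Fin.sum_univ_eq_sum_range (fun k => if a ∈ S k then sharedWeight L k else 0)]
  have := missing_of_mem h0 hsub ha
  rw [missing] at this
  linarith

/-! ### Offline and online utilities on the hard instance -/

/-- The offline allocation: shared items are split evenly within `S L`, personal items go to their
owners. -/
noncomputable def offline {n : ℕ} (L : ℕ) (S : ℕ → Finset (Fin n)) (k : ℕ) (a : Fin n) : ℝ :=
  if k < L + 1 then (if a ∈ S L then 1 / ((S L).card : ℝ) else 0)
  else if k = L + 1 + a then 1 else 0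

lemma offline_sum_le {n : ℕ} (L : ℕ) (S : ℕ → Finset (Fin n)) (k : Fin (L + 1 + n)) :
    ∑ a, offline L S k a ≤ 1 := by
  refine Fin.addCases (fun k => ?_) (fun b => ?_) k
  · have := k.2
    simp only [offline, Fin.val_castAdd, this, if_true]
    rw [← Finset.sum_filter]
    simpa using mul_inv_le_one
  · have : ∀ a : Fin n, offline L S (Fin.natAdd (L + 1) b) a = if b = a then 1 else 0 := by
      intro a
      have hL : ¬ L + 1 + b.1 < L + 1 := by omega
      simp only [offline, Fin.val_natAdd, hL, if_false, Fin.ext_iff, add_right_inj]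
    simp only [this]
    simp

lemma offline_utility {n : ℕ} {L : ℕ} {S : ℕ → Finset (Fin n)} (h0 : S 0 = Finset.univ)
    (hsub : ∀ k, S (k + 1) ⊆ S k) (a : Fin n) :
    ∑ k : Fin (L + 1 + n), hardValue L S k.1 a * offline L S k.1 a =
      if a ∈ S L then 1 / ((S L).card : ℝ) else missing L S a := by
  rw [hardValue_sum L S a (fun k => offline L S k.1 a)]
  have h1 : ∀ k : Fin (L + 1), offline L S (Fin.castAdd n k : Fin (L + 1 + n)).1 a =
      if a ∈ S L then 1 / ((S L).card : ℝ) else 0 := by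
    intro k
    have hk : k.1 < L + 1 := k.2
    simp only [offline, Fin.val_castAdd, hk, if_true]
  have h2 : offline L S (Fin.natAdd (L + 1) a : Fin (L + 1 + n)).1 a = 1 := by
    have hL : ¬ L + 1 + a.1 < L + 1 := by omega
    simp only [offline, Fin.val_natAdd, hL, if_false, if_true]
  simp only [h1, h2, ← Finset.sum_mul]
  by_cases ha : a ∈ S L
  · rw [sum_sharedWeight h0 hsub ha, missing_of_mem h0 hsub ha]
    simp [ha]
  · simp [ha]

lemma card_eq {n : ℕ} {S : ℕ → Finset (Fin n)} (h0 : S 0 = Finset.univ)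
    (hc : ∀ k, (S (k + 1)).card = (S k).card / 2) (k : ℕ) : (S k).card = n / 2 ^ k := by
  induction k with
  | zero => simp [h0]
  | succ k ih => rw [hc, ih, Nat.div_div_eq_div_mul, pow_succ]

lemma card_le {n : ℕ} {S : ℕ → Finset (Fin n)} (h0 : S 0 = Finset.univ)
    (hc : ∀ k, (S (k + 1)).card = (S k).card / 2) (k : ℕ) : ((S k).card : ℝ) * 2 ^ k ≤ n := by
  rw [card_eq h0 hc]
  exact_mod_cast Nat.div_mul_le_self n (2 ^ k)

lemma le_card {n : ℕ} {S : ℕ → Finset (Fin n)} (h0 : S 0 = Finset.univ)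
    (hc : ∀ k, (S (k + 1)).card = (S k).card / 2) (k : ℕ) (hk : 2 ^ k ≤ n) :
    (n : ℝ) ≤ ((S k).card : ℝ) * 2 ^ (k + 1) := by
  rw [card_eq h0 hc]
  have h1 : 1 ≤ n / 2 ^ k := (Nat.one_le_div_iff (by positivity)).2 hk
  have h2 := Nat.lt_mul_div_succ n (show 0 < 2 ^ k by positivity)
  have : n ≤ n / 2 ^ k * 2 ^ (k + 1) := by
    rw [pow_succ]
    nlinarith [Nat.mul_le_mul_left (2 ^ k) h1]
  exact_mod_cast this

/-- The power sum of the offline utilities is `O(n L)` plus the contribution of `S L`. An agent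
leaving after item `i` costs at most `2^{i+1}` since `q ≤ 1`, and at most `n / 2^i` agents do. -/
lemma offline_powerSum {n : ℕ} {L : ℕ} {S : ℕ → Finset (Fin n)} (h0 : S 0 = Finset.univ)
    (hsub : ∀ k, S (k + 1) ⊆ S k) (hc : ∀ k, (S (k + 1)).card = (S k).card / 2)
    {q : ℝ} (hq1 : q ≤ 1) :
    ∑ a, (if a ∈ S L then 1 / ((S L).card : ℝ) else missing L S a) ^ (-q) ≤
      2 * n * L + ((S L).card : ℝ) * ((S L).card : ℝ) ^ q := by
  have hpt : ∀ a : Fin n, (if a ∈ S L then 1 / ((S L).card : ℝ) else missing L S a) ^ (-q) ≤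
      (∑ i ∈ Finset.range L, if a ∈ S i then (2 : ℝ) ^ (i + 1) else 0)
        + if a ∈ S L then ((S L).card : ℝ) ^ q else 0 := by
    intro a
    have hnn : ∀ i ∈ Finset.range L, (0 : ℝ) ≤ if a ∈ S i then (2 : ℝ) ^ (i + 1) else 0 := by
      intro i _; split_ifs <;> positivity
    by_cases ha : a ∈ S L
    · rw [if_pos ha, if_pos ha, one_div, inv_rpow (by positivity), rpow_neg (by positivity),
        inv_inv]
      exact le_add_of_nonneg_left (Finset.sum_nonneg hnn)
    · rw [if_neg ha, if_neg ha, add_zero]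
      obtain ⟨i, hi, hia, h⟩ := missing_of_not_mem h0 hsub ha
      rw [h, one_div, inv_pow, inv_rpow (by positivity), rpow_neg (by positivity), inv_inv]
      calc ((2 : ℝ) ^ (i + 1)) ^ q ≤ ((2 : ℝ) ^ (i + 1)) ^ (1 : ℝ) :=
            rpow_le_rpow_of_exponent_le (one_le_pow₀ (by norm_num)) hq1
        _ = if a ∈ S i then (2 : ℝ) ^ (i + 1) else 0 := by rw [rpow_one, if_pos hia]
        _ ≤ _ := Finset.single_le_sum
            (f := fun i => if a ∈ S i then (2 : ℝ) ^ (i + 1) else 0) hnn (Finset.mem_range.2 hi)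
  refine (Finset.sum_le_sum fun a _ => hpt a).trans ?_
  rw [Finset.sum_add_distrib, Finset.sum_comm]
  refine add_le_add ?_ (le_of_eq ?_)
  · calc ∑ i ∈ Finset.range L, ∑ a, (if a ∈ S i then (2 : ℝ) ^ (i + 1) else 0)
        ≤ ∑ i ∈ Finset.range L, 2 * (n : ℝ) := by
          refine Finset.sum_le_sum fun i _ => ?_
          rw [← Finset.sum_filter]
          have := card_le h0 hc i
          simp only [Finset.sum_const, Finset.filter_univ_mem, nsmul_eq_mul, pow_succ]
          linarith
      _ = 2 * n * L := by simp; ring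
  · rw [← Finset.sum_filter]
    simp

/-- On the hard instance for `survivors`, the agents in the last set end up with utility
`O(L / n)`. -/
lemma online_utility_le {n : ℕ} (A : (k : ℕ) → (Fin (k + 1) → Fin n → ℝ) → (Fin n → ℝ))
    (hA : ∀ k h, (∀ a, 0 ≤ A k h a) ∧ ∑ a, A k h a ≤ 1) (L : ℕ) (hL : 2 ^ L ≤ n) (b : Fin n)
    (hb : b ∈ survivors A (sharedWeight L) (L + 1)) :
    onlineUtilities n (L + 1 + n) A
      (fun k => hardValue L (survivors A (sharedWeight L)) k.1) b ≤ 4 * (L + 1) / n := by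
  set S := survivors A (sharedWeight L) with hS
  have h0 : S 0 = Finset.univ := by rw [hS, survivors]
  have hsub : ∀ k, S (k + 1) ⊆ S k := fun k => (survivors_succ A hA _ k).1
  have hc : ∀ k, (S (k + 1)).card = (S k).card / 2 := fun k => (survivors_succ A hA _ k).2.1
  have hanti : Antitone S := antitone_nat_of_succ_le hsub
  have hn : (0 : ℝ) < n := by
    have : 0 < n := lt_of_lt_of_le (by positivity) hL
    exact_mod_cast this
  unfold onlineUtilities
  rw [hardValue_sum L S b, missing_of_mem h0 hsub (hsub L hb), zero_mul, add_zero]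
  calc _ ≤ ∑ k : Fin (L + 1), 4 / (n : ℝ) := by
        refine Finset.sum_le_sum fun k _ => ?_
        have hk : k.1 ≤ L := by omega
        have hh : (fun i : Fin ((Fin.castAdd n k).1 + 1) =>
            hardValue L S (Fin.castLE (Fin.castAdd n k).isLt i).1)
            = (fun (i : Fin (k.1 + 1)) a => if a ∈ S i.1 then sharedWeight L i.1 else 0) := by
          funext i a
          have hi : i.1 < L + 1 := by have := i.2; simp only [Fin.val_castAdd] at this; omega
          simp only [hardValue, Fin.val_castLE, hi, if_true]
        have hbk : b ∈ S k := hanti (show k.1 ≤ L + 1 by omega) hb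
        have hbk' : b ∈ S (k.1 + 1) := hanti (show k.1 + 1 ≤ L + 1 by omega) hb
        rw [if_pos hbk]
        have key := (survivors_succ A hA (sharedWeight L) k).2.2 b hbk'
        rw [← hS] at key
        have hx0 := (hA k.1 (fun i a => if a ∈ S i.1 then sharedWeight L i.1 else 0)).1 b
        have hcard := le_card h0 hc k.1 ((Nat.pow_le_pow_right (by norm_num) hk).trans hL)
        have hw := sharedWeight_le L k hk
        have hw0 := sharedWeight_nonneg L k
        change sharedWeight L k * A k.1 (fun i : Fin ((Fin.castAdd n k).1 + 1) =>
            hardValue L S (Fin.castLE (Fin.castAdd n k).isLt i).1) b ≤ _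
        rw [hh]
        generalize A k.1 (fun i a => if a ∈ S i.1 then sharedWeight L i.1 else 0) b = x at *
        rw [le_div_iff₀ hn]
        have h2 : ((1 : ℝ) / 2) ^ k.1 * 2 ^ k.1 = 1 := by rw [← mul_pow]; norm_num
        calc sharedWeight L k * x * n
            ≤ (1 / 2) ^ k.1 * x * (((S k).card : ℝ) * 2 ^ (k.1 + 1)) := by gcongr
          _ = 2 * (((1 : ℝ) / 2) ^ k.1 * 2 ^ k.1) * (x * ((S k).card : ℝ)) := by ring
          _ ≤ 4 := by rw [h2]; linarith
    _ = 4 * (L + 1) / n := by simp; ring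

/-! ### Choice of parameters -/

/-- The reduction of the theorem to a choice of the number `L` of halving rounds, written with
`q = -p` and `X = n^{q/(q+1)}`, the latter given by `X^{1+q} = n^q`. -/
lemma hard_instance_s17 {n : ℕ} {q X c : ℝ} {L : ℕ} (hq : 0 < q) (hq1 : q ≤ 1)
    (hX : X ^ (1 + q) = (n : ℝ) ^ q) (hX0 : 0 < X) (hXL : X ≤ 2 ^ L) (hLX : (2 : ℝ) ^ L ≤ 2 * X)
    (hLn : 2 ^ (L + 1) ≤ n) (hc0 : 0 < c) (hcq : 96 * ((L : ℝ) + 1) ^ 2 * c ^ q ≤ X ^ q)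
    (A : (k : ℕ) → (Fin (k + 1) → Fin n → ℝ) → (Fin n → ℝ))
    (hA : ∀ k h, (∀ a, 0 ≤ A k h a) ∧ ∑ a, A k h a ≤ 1) :
    ∃ m : ℕ, ∃ v : Fin m → Fin n → ℝ,
      (∀ k a, 0 ≤ v k a) ∧ (∀ a, ∑ k, v k a = 1) ∧
      (∀ k, ∃ w : ℝ, 0 ≤ w ∧ ∀ a, v k a = 0 ∨ v k a = w) ∧
      OPTwelfare n m (-q) v ≥ c * ALGwelfare n m (-q) A v := by
  set S := survivors A (sharedWeight L) with hS
  have h0 : S 0 = Finset.univ := by rw [hS, survivors]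
  have hsub : ∀ k, S (k + 1) ⊆ S k := fun k => (survivors_succ A hA _ k).1
  have hc : ∀ k, (S (k + 1)).card = (S k).card / 2 := fun k => (survivors_succ A hA _ k).2.1
  have hn : 0 < n := lt_of_lt_of_le (by positivity) hLn
  have hn' : (0 : ℝ) < n := by exact_mod_cast hn
  have hLn' : 2 ^ L ≤ n := (Nat.pow_le_pow_right (by norm_num) (Nat.le_succ L)).trans hLn
  have hv0 : ∀ (k : Fin (L + 1 + n)) a, 0 ≤ hardValue L S k.1 a :=
    fun k a => hardValue_nonneg h0 hsub k a
  have hsL : (0 : ℝ) < (S L).card := by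
    have := le_card h0 hc L hLn'
    by_contra hcon
    have hz : ((S L).card : ℝ) = 0 := le_antisymm (not_lt.1 hcon) (by positivity)
    rw [hz, zero_mul] at this
    linarith
  refine ⟨L + 1 + n, fun k => hardValue L S k.1, hv0, hardValue_sum_one L S, ?_, ?_⟩
  · intro k
    by_cases hk : k.1 < L + 1
    · refine ⟨sharedWeight L k, sharedWeight_nonneg L k, fun a => ?_⟩
      simp only [hardValue, hk, if_true]
      by_cases ha : a ∈ S k <;> simp [ha]
    · refine ⟨missing L S ⟨k.1 - (L + 1), by omega⟩, missing_nonneg h0 hsub _, fun a => ?_⟩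
      simp only [hardValue, hk, if_false]
      by_cases ha : k.1 = L + 1 + a
      · right
        rw [if_pos ha]
        congr 1
        apply Fin.ext
        simp [ha]
      · left; rw [if_neg ha]
  · have hopt := le_OPT hn (neg_lt_zero.2 hq) (fun k : Fin (L + 1 + n) => hardValue L S k.1) hv0
      (hardValue_sum_one L S) (fun k => offline L S k.1)
      (fun k a => by unfold offline; split_ifs <;> positivity) (offline_sum_le L S)
    refine le_trans ?_ hopt
    simp only [offline_utility h0 hsub]
    refine pMean_compare hn (neg_lt_zero.2 hq) hc0 _ _ (fun a => ?_) (fun a => ?_) ?_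
    · by_cases ha : a ∈ S L
      · rw [if_pos ha]; positivity
      · rw [if_neg ha]
        obtain ⟨i, -, -, h⟩ := missing_of_not_mem h0 hsub ha
        rw [h]; positivity
    · exact Finset.sum_nonneg fun k _ => mul_nonneg (hv0 k a) ((hA _ _).1 a)
    · intro hpos
      rw [neg_neg]
      have hM : (1 : ℝ) ≤ (L : ℝ) + 1 := by linarith [(Nat.cast_nonneg L : (0 : ℝ) ≤ L)]
      -- Offline side: `|S L| ≤ n / X` gives `|S L|^{1+q} ≤ n`.
      have hs1 : ((S L).card : ℝ) * ((S L).card : ℝ) ^ q ≤ n := by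
        have h1 : ((S L).card : ℝ) ≤ n / X := by
          rw [le_div_iff₀ hX0]
          exact (mul_le_mul_of_nonneg_left hXL hsL.le).trans (card_le h0 hc L)
        calc ((S L).card : ℝ) * ((S L).card : ℝ) ^ q = ((S L).card : ℝ) ^ (1 + q) := by
              rw [rpow_add hsL, rpow_one]
          _ ≤ (n / X) ^ (1 + q) := rpow_le_rpow hsL.le h1 (by linarith)
          _ = n := by
              rw [div_rpow hn'.le hX0.le, hX, rpow_add hn', rpow_one]
              field_simp
      have hO := offline_powerSum h0 hsub hc (L := L) hq1
      have hO' : ∑ a, (if a ∈ S L then 1 / ((S L).card : ℝ) else missing L S a) ^ (-q)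
          ≤ 3 * n * ((L : ℝ) + 1) := by nlinarith
      -- Online side: the last survivors alone make the power sum large.
      have hB : (n : ℝ) / (8 * X) ≤ (S (L + 1)).card := by
        rw [div_le_iff₀ (by positivity)]
        have := le_card h0 hc (L + 1) hLn
        rw [show L + 1 + 1 = L + 2 by rfl, pow_add] at this
        have h3 : ((S (L + 1)).card : ℝ) * (2 ^ L * 2 ^ 2)
            ≤ (S (L + 1)).card * ((2 * X) * 2 ^ 2) := by gcongr
        linarith
      have hU : ∀ b ∈ S (L + 1), (n : ℝ) ^ q / (4 * ((L : ℝ) + 1)) ≤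
          onlineUtilities n (L + 1 + n) A (fun k => hardValue L S k.1) b ^ (-q) := by
        intro b hb
        have hu := online_utility_le A hA L hLn' b hb
        calc (n : ℝ) ^ q / (4 * ((L : ℝ) + 1))
            ≤ (n : ℝ) ^ q / (4 * ((L : ℝ) + 1)) ^ q := by
              gcongr
              calc (4 * ((L : ℝ) + 1)) ^ q ≤ (4 * ((L : ℝ) + 1)) ^ (1 : ℝ) :=
                    rpow_le_rpow_of_exponent_le (by linarith) hq1
                _ = _ := rpow_one _
          _ = (4 * ((L : ℝ) + 1) / n) ^ (-q) := by
              rw [rpow_neg (by positivity), div_rpow (by positivity) hn'.le, inv_div]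
          _ ≤ _ := rpow_le_rpow_of_nonpos (hpos b) hu (by linarith)
      have hXq : (n : ℝ) / (8 * X) * ((n : ℝ) ^ q / (4 * ((L : ℝ) + 1)))
          = n * X ^ q / (32 * ((L : ℝ) + 1)) := by
        rw [← hX, rpow_add hX0, rpow_one]
        field_simp
        ring
      calc _ ≤ 3 * n * ((L : ℝ) + 1) * c ^ q := by gcongr
        _ ≤ n * X ^ q / (32 * ((L : ℝ) + 1)) := by
            rw [le_div_iff₀ (by positivity)]
            have := mul_le_mul_of_nonneg_left hcq hn'.le
            linarith
        _ = (n : ℝ) / (8 * X) * ((n : ℝ) ^ q / (4 * ((L : ℝ) + 1))) := hXq.symm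
        _ ≤ (S (L + 1)).card * ((n : ℝ) ^ q / (4 * ((L : ℝ) + 1))) := by gcongr
        _ = ∑ b ∈ S (L + 1), ((n : ℝ) ^ q / (4 * ((L : ℝ) + 1))) := by simp
        _ ≤ ∑ b ∈ S (L + 1),
              onlineUtilities n (L + 1 + n) A (fun k => hardValue L S k.1) b ^ (-q) :=
            Finset.sum_le_sum hU
        _ ≤ _ := Finset.sum_le_sum_of_subset_of_nonneg (Finset.subset_univ _)
            fun a _ _ => (rpow_pos_of_pos (hpos a) _).le

/-- The polylogarithmic loss `96 j²`, with `2^j ≤ n`, is absorbed by `n^η`. -/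
lemma eventually_polylog {η : ℝ} (hη : 0 < η) :
    ∃ N : ℕ, ∀ n : ℕ, N ≤ n → ∀ j : ℕ, 2 ^ j ≤ n → 96 * (j : ℝ) ^ 2 ≤ (n : ℝ) ^ η := by
  have hl : 0 < Real.log 2 := Real.log_pos (by norm_num)
  have h := (isLittleO_log_rpow_atTop (half_pos hη)).bound (div_pos hl (by norm_num : (0 : ℝ) < 10))
  obtain ⟨N, hN⟩ := Filter.eventually_atTop.1 (tendsto_natCast_atTop_atTop.eventually h)
  refine ⟨N, fun n hn j hj => ?_⟩
  have hn0 : 0 < n := lt_of_lt_of_le (by positivity) hj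
  have hn0' : (0 : ℝ) < n := by exact_mod_cast hn0
  have h1 := hN n hn
  rw [Real.norm_of_nonneg (rpow_nonneg hn0'.le _)] at h1
  have h2 : (j : ℝ) * Real.log 2 ≤ Real.log n := by
    rw [← Real.log_pow]
    exact Real.log_le_log (by positivity) (by exact_mod_cast hj)
  have h3 : (j : ℝ) * 10 ≤ (n : ℝ) ^ (η / 2) := by
    have := h2.trans ((le_abs_self _).trans h1)
    have h4 : Real.log 2 * (j * 10) ≤ Real.log 2 * (n : ℝ) ^ (η / 2) := by linarith
    exact le_of_mul_le_mul_left h4 hl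
  have h5 : (n : ℝ) ^ η = (n : ℝ) ^ (η / 2) * (n : ℝ) ^ (η / 2) := by
    rw [← rpow_add hn0', add_halves]
  rw [h5]
  nlinarith [mul_self_le_mul_self (by positivity) h3, sq_nonneg (j : ℝ)]

theorem stmt_17 :
    ∀ ε : ℝ, 0 < ε → ∀ δ : ℝ, 0 < δ → δ ≤ 1 →
    ∃ n₀ : ℕ, ∀ n : ℕ, n₀ ≤ n →
    ∀ p : ℝ, -1 ≤ p → p ≤ -δ →
    ∀ A : (k : ℕ) → (Fin (k + 1) → Fin n → ℝ) → (Fin n → ℝ),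
      (∀ k h, (∀ a, 0 ≤ A k h a) ∧ ∑ a, A k h a ≤ 1) →
      ∃ m : ℕ, ∃ v : Fin m → Fin n → ℝ,
        (∀ k a, 0 ≤ v k a) ∧ (∀ a, ∑ k, v k a = 1) ∧
        (∀ k, ∃ w : ℝ, 0 ≤ w ∧ ∀ a, v k a = 0 ∨ v k a = w) ∧
        OPTwelfare n m p v ≥
          (n : ℝ) ^ (|p| / (|p| + 1) - ε) * ALGwelfare n m p A v := by
  intro ε hε δ hδ _
  obtain ⟨N, hN⟩ := eventually_polylog (mul_pos hδ hε)
  refine ⟨max N 16, fun n hn p hp1 hpδ A hA => ?_⟩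
  obtain ⟨q, rfl⟩ : ∃ q, p = -q := ⟨-p, by ring⟩
  have hqδ : δ ≤ q := by linarith
  have hq : 0 < q := by linarith
  have hq1 : q ≤ 1 := by linarith
  rw [abs_neg, abs_of_pos hq]
  have hn16 : (16 : ℝ) ≤ n := by exact_mod_cast (le_max_right N 16).trans hn
  have hn0 : (0 : ℝ) < n := by linarith
  have hn1 : (1 : ℝ) ≤ n := by linarith
  set X : ℝ := (n : ℝ) ^ (q / (q + 1)) with hXdef
  have hX0 : 0 < X := rpow_pos_of_pos hn0 _
  have hX1 : 1 ≤ X := one_le_rpow hn1 (by positivity)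
  obtain ⟨l, hl1, hl2⟩ := exists_nat_pow_near hX1 (by norm_num : (1 : ℝ) < 2)
  have hX : X ^ (1 + q) = (n : ℝ) ^ q := by
    rw [hXdef, ← rpow_mul hn0.le]
    congr 1
    field_simp
    ring
  have hLX : (2 : ℝ) ^ (l + 1) ≤ 2 * X := by rw [pow_succ]; linarith
  have hLn : 2 ^ (l + 1 + 1) ≤ n := by
    have hXs : X ≤ √n := by
      rw [hXdef, sqrt_eq_rpow]
      refine rpow_le_rpow_of_exponent_le hn1 ?_
      rw [div_le_div_iff₀ (by positivity) (by norm_num)]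
      linarith
    have h4 : (4 : ℝ) ≤ √n := Real.le_sqrt_of_sq_le (by linarith)
    have hsq : √(n : ℝ) * √n = n := Real.mul_self_sqrt hn0.le
    have : (2 : ℝ) ^ (l + 1 + 1) ≤ n := by
      rw [pow_succ]
      nlinarith
    exact_mod_cast this
  refine hard_instance_s17 hq hq1 hX hX0 hl2.le hLX hLn (rpow_pos_of_pos hn0 _) ?_ A hA
  have hpoly := hN n ((le_max_left N 16).trans hn) (l + 1 + 1) hLn
  have hpoly' : 96 * (((l + 1 : ℕ) : ℝ) + 1) ^ 2 ≤ (n : ℝ) ^ (q * ε) := by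
    refine (le_of_eq ?_).trans (hpoly.trans
      (rpow_le_rpow_of_exponent_le hn1 (mul_le_mul_of_nonneg_right hqδ hε.le)))
    push_cast
    ring
  have hcX : (n : ℝ) ^ (q * ε) * ((n : ℝ) ^ (q / (q + 1) - ε)) ^ q = X ^ q := by
    rw [hXdef, ← rpow_mul hn0.le, ← rpow_mul hn0.le, ← rpow_add hn0]
    congr 1
    ring
  rw [← hcX]
  gcongr
end
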